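/- Let A = (ℝ/ℤ) × [0,1] be the closed annulus and let h : A → A be a homeomorphism that is homotopic to the identity map (as continuous maps) and maps the boundary circle (ℝ/ℤ) × {0} onto itself. Then h is isotopic to the identity: there exists a continuous map F : [0,1] × A → A such that F(0,·) = h, F(1,·) = id, and F(t,·) : A → A is a homeomorphism for every t ∈ [0,1]. -/

import Mathlib

open unitInterval

/-!
Place the annulus in the plane as `1 ≤ ‖w‖ ≤ e`. Being homotopic to the identity, `h` has a
continuous angular displacement, which can be faded out on collars of the two boundary circles;
so `h` extends to a homeomorphism `g` of the plane that is the identity near `0` and near infinity.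

Such a `g` is isotopic to the identity through homeomorphisms that fix a neighbourhood of infinity
and rotate a neighbourhood of `0`. Indeed, some simple polyline leads from a point far out on the
negative axis to `0` without meeting the image under `g` of the positive axis. Dragging the hole at
`0` out and back in along this polyline gives an isotopically trivial `u` for which the image of
the negative axis misses `g (0, ∞)`, so that `u⁻¹ g` maps the positive axis into the slit plane.
Squeezing the logarithm of `u⁻¹ g` into a strip around the real line, one finds a homeomorphism
supported in the slit plane that agrees with `u⁻¹ g` near the positive axis, and Alexander's trick
in the slit plane and in its reflection trivializes both factors.

An annulus containing the support of this isotopy is preserved by it; so let `g` first act on wider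
and wider annuli, which deforms `h` through conjugates of restrictions of `g`, and then run the
isotopy.
-/

namespace AnnulusIsotopy

open Set Filter Topology Metric

section Plateau

variable {E : Type*} [NormedAddCommGroup E]

/-- A continuous plateau function: it is `1` on the closed ball of radius `ρ` about `x` and
vanishes outside the ball of radius `3 * ρ`. -/
noncomputable def plateau (x : E) (ρ : ℝ) (z : E) : ℝ :=
  max 0 (min 1 ((3 - ‖z - x‖ / ρ) / 2))

lemma plateau_nonneg (x : E) (ρ : ℝ) (z : E) : 0 ≤ plateau x ρ z := le_max_left _ _

lemma plateau_le_one (x : E) (ρ : ℝ) (z : E) : plateau x ρ z ≤ 1 :=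
  max_le zero_le_one (min_le_left _ _)

lemma plateau_eq_one {x z : E} {ρ : ℝ} (hρ : 0 < ρ) (hz : ‖z - x‖ ≤ ρ) : plateau x ρ z = 1 := by
  have : ‖z - x‖ / ρ ≤ 1 := (div_le_one hρ).2 hz
  rw [plateau, min_eq_left (by linarith), max_eq_right zero_le_one]

lemma plateau_eq_zero {x z : E} {ρ : ℝ} (hρ : 0 < ρ) (hz : 3 * ρ ≤ ‖z - x‖) :
    plateau x ρ z = 0 := by
  have : 3 ≤ ‖z - x‖ / ρ := (le_div_iff₀ hρ).2 hz
  exact max_eq_left ((min_le_right _ _).trans (by linarith))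

lemma continuous_plateau {X : Type*} [TopologicalSpace X] {x z : X → E} {ρ : X → ℝ}
    (hx : Continuous x) (hρ : Continuous ρ) (hz : Continuous z) (h0 : ∀ a, ρ a ≠ 0) :
    Continuous fun a ↦ plateau (x a) (ρ a) (z a) := by
  unfold plateau
  fun_prop (disch := assumption)

lemma abs_plateau_sub_plateau_le {ρ : ℝ} (hρ : 0 < ρ) (x z w : E) :
    |plateau x ρ z - plateau x ρ w| ≤ ‖z - w‖ / (2 * ρ) := by
  calc |plateau x ρ z - plateau x ρ w|
      ≤ |min 1 ((3 - ‖z - x‖ / ρ) / 2) - min 1 ((3 - ‖w - x‖ / ρ) / 2)| := by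
        simpa only [plateau, max_comm (0 : ℝ)] using abs_max_sub_max_le_abs _ _ _
    _ ≤ |(3 - ‖z - x‖ / ρ) / 2 - (3 - ‖w - x‖ / ρ) / 2| := by
        refine (abs_min_sub_min_le_max _ _ _ _).trans_eq ?_
        rw [sub_self, abs_zero, max_eq_right (abs_nonneg _)]
    _ = |‖z - x‖ - ‖w - x‖| / (2 * ρ) := by
        have : (3 - ‖z - x‖ / ρ) / 2 - (3 - ‖w - x‖ / ρ) / 2
            = -((‖z - x‖ - ‖w - x‖) / (2 * ρ)) := by
          field_simp
          ring
        rw [this, abs_neg, abs_div, abs_of_pos (show 0 < 2 * ρ by positivity)]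
    _ ≤ ‖z - w‖ / (2 * ρ) := by
        gcongr
        simpa only [sub_sub_sub_cancel_right] using abs_norm_sub_norm_le (z - x) (w - x)

end Plateau

section Push

variable {E : Type*} [NormedAddCommGroup E] [NormedSpace ℝ E]

lemma approximatesLinearOn_push {ρ : ℝ} (x v : E) (hv : ‖v‖ < 2 * ρ) :
    ApproximatesLinearOn (fun z ↦ z + plateau x ρ z • v)
      (ContinuousLinearEquiv.refl ℝ E : E →L[ℝ] E) univ (‖v‖ / (2 * ρ)).toNNReal := by
  have hρ : 0 < ρ := by linarith [norm_nonneg v]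
  intro z _ w _
  rw [Real.coe_toNNReal _ (by positivity)]
  calc ‖z + plateau x ρ z • v - (w + plateau x ρ w • v) - (z - w)‖
      = |plateau x ρ z - plateau x ρ w| * ‖v‖ := by
        rw [← Real.norm_eq_abs, ← norm_smul, sub_smul]
        congr 1
        abel
    _ ≤ ‖z - w‖ / (2 * ρ) * ‖v‖ := by gcongr; exact abs_plateau_sub_plateau_le hρ x z w
    _ = ‖v‖ / (2 * ρ) * ‖z - w‖ := by ring

lemma push_constant_lt {ρ : ℝ} {v : E} (hv : ‖v‖ < 2 * ρ) :
    Subsingleton E ∨ (‖v‖ / (2 * ρ)).toNNReal <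
      ‖((ContinuousLinearEquiv.refl ℝ E).symm : E →L[ℝ] E)‖₊⁻¹ := by
  have hρ : 0 < 2 * ρ := (norm_nonneg v).trans_lt hv
  rcases subsingleton_or_nontrivial E with hE | hE
  · exact .inl hE
  · right
    have : ‖((ContinuousLinearEquiv.refl ℝ E).symm : E →L[ℝ] E)‖₊ = 1 :=
      ContinuousLinearMap.nnnorm_id
    rw [this, inv_one, Real.toNNReal_lt_one]
    exact (div_lt_one hρ).2 hv

variable [CompleteSpace E]

/-- The homeomorphism that translates the closed ball of radius `ρ` about `x` by `v` and is the
identity outside the ball of radius `3 * ρ`. -/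
noncomputable def push (x : E) (ρ : ℝ) (v : E) (hv : ‖v‖ < 2 * ρ) : E ≃ₜ E :=
  (approximatesLinearOn_push x v hv).toHomeomorph _ (push_constant_lt hv)

lemma push_apply {x v : E} {ρ : ℝ} (hv : ‖v‖ < 2 * ρ) (z : E) :
    push x ρ v hv z = z + plateau x ρ z • v := rfl

/-- A homeomorphism that moves `x` to `0` by a translation on a neighbourhood of the segment
between them, and is the identity far away. -/
noncomputable def recenter (x : E) : E ≃ₜ E :=
  push 0 (1 + ‖x‖) (-x) (by linarith [norm_neg x, norm_nonneg x])

lemma recenter_apply (x z : E) : recenter x z = z - plateau 0 (1 + ‖x‖) z • x := by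
  rw [recenter, push_apply, smul_neg, sub_eq_add_neg]

lemma recenter_zero : recenter (0 : E) = 1 := by
  ext z
  rw [recenter_apply, smul_zero, sub_zero, Homeomorph.one_apply]

lemma recenter_of_norm_le {x z : E} (hz : ‖z‖ ≤ 1 + ‖x‖) : recenter x z = z - x := by
  rw [recenter_apply, plateau_eq_one (by positivity) (by rwa [sub_zero]), one_smul]

lemma recenter_add_of_norm_le {x z : E} (hz : ‖z‖ ≤ 1) : recenter x (x + z) = z := by
  rw [recenter_of_norm_le (by linarith [norm_add_le x z]), add_sub_cancel_left]

lemma inv_recenter_of_norm_le {x z : E} (hz : ‖z‖ ≤ 1) : (recenter x)⁻¹ z = x + z := by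
  rw [Homeomorph.inv_apply, Homeomorph.symm_apply_eq, recenter_add_of_norm_le hz]

lemma recenter_of_le_norm {x z : E} (hz : 3 * (1 + ‖x‖) ≤ ‖z‖) : recenter x z = z := by
  rw [recenter_apply, plateau_eq_zero (by positivity) (by rwa [sub_zero]), zero_smul, sub_zero]

lemma inv_recenter_of_le_norm {x z : E} (hz : 3 * (1 + ‖x‖) ≤ ‖z‖) : (recenter x)⁻¹ z = z := by
  rw [Homeomorph.inv_apply, Homeomorph.symm_apply_eq, recenter_of_le_norm hz]

lemma continuous_recenter {X : Type*} [TopologicalSpace X] {x z : X → E}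
    (hx : Continuous x) (hz : Continuous z) : Continuous fun a ↦ recenter (x a) (z a) := by
  simp only [recenter_apply]
  exact hz.sub ((continuous_plateau continuous_const (continuous_const.add hx.norm) hz
    fun a ↦ (by positivity : 0 < 1 + ‖x a‖).ne').smul hx)

end Push

section BoundedDisplacement

variable {E : Type*} [NormedAddCommGroup E]

lemma exists_norm_sub_le_of_compact_support {f : E → E} (hf : Continuous f) {K : Set E}
    (hK : IsCompact K) (hfK : ∀ z ∉ K, f z = z) : ∃ C, ∀ z, ‖f z - z‖ ≤ C := by
  obtain ⟨C, hC⟩ := hK.exists_bound_of_continuousOn (hf.sub continuous_id).continuousOn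
  refine ⟨max C 0, fun z ↦ ?_⟩
  by_cases hz : z ∈ K
  · exact (hC z hz).trans (le_max_left _ _)
  · rw [hfK z hz, sub_self, norm_zero]
    exact le_max_right _ _

end BoundedDisplacement

section AnnularIsotopies

/-- `F` is an isotopy of the plane ending at the identity and supported in the punctured disc of
radius `R`, up to rotations of the disc of radius `r`. -/
structure IsAnnularIsotopy (F : I × ℂ → ℂ) (r R : ℝ) : Prop where
  continuous : Continuous F
  bijective (t : I) : Function.Bijective fun z ↦ F (t, z)
  rotates (t : I) : ∃ c : Circle, ∀ z, ‖z‖ ≤ r → F (t, z) = c * z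
  eq_self (t : I) (z : ℂ) : R ≤ ‖z‖ → F (t, z) = z
  one_apply (z : ℂ) : F (1, z) = z

lemma IsAnnularIsotopy.comp {F G : I × ℂ → ℂ} {r r' R R' : ℝ} (hF : IsAnnularIsotopy F r R)
    (hG : IsAnnularIsotopy G r' R') :
    IsAnnularIsotopy (fun p ↦ F (p.1, G p)) (min r r') (max R R') where
  continuous := hF.continuous.comp (continuous_fst.prodMk hG.continuous)
  bijective t := (hF.bijective t).comp (hG.bijective t)
  rotates t := by
    obtain ⟨c, hc⟩ := hF.rotates t
    obtain ⟨d, hd⟩ := hG.rotates t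
    refine ⟨c * d, fun z hz ↦ ?_⟩
    rw [hd z (hz.trans (min_le_right _ _)), hc, Circle.coe_mul, mul_assoc]
    rw [norm_mul, Circle.norm_coe, one_mul]
    exact hz.trans (min_le_left _ _)
  eq_self t z hz := by
    rw [hG.eq_self t z ((le_max_right _ _).trans hz),
      hF.eq_self t z ((le_max_left _ _).trans hz)]
  one_apply z := by rw [hG.one_apply, hF.one_apply]

lemma IsAnnularIsotopy.inv {F : I × ℂ → ℂ} {r R : ℝ} (hF : IsAnnularIsotopy F r R) {f : ℂ ≃ₜ ℂ}
    (hf : ∀ z, F (0, z) = f z) :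
    IsAnnularIsotopy (fun p ↦ f⁻¹ (F (unitInterval.symm p.1, p.2))) r R where
  continuous := f⁻¹.continuous.comp (hF.continuous.comp (by fun_prop))
  bijective t := f⁻¹.bijective.comp (hF.bijective (unitInterval.symm t))
  rotates t := by
    obtain ⟨c, hc⟩ := hF.rotates 0
    obtain ⟨d, hd⟩ := hF.rotates (unitInterval.symm t)
    refine ⟨c⁻¹ * d, fun z hz ↦ ?_⟩
    have hz' : ‖(c⁻¹ * d : Circle) * z‖ ≤ r := by rwa [norm_mul, Circle.norm_coe, one_mul]
    rw [hd z hz, Homeomorph.inv_apply, Homeomorph.symm_apply_eq, ← hf, hc _ hz', ← mul_assoc,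
      ← Circle.coe_mul, mul_inv_cancel_left]
  eq_self t z hz := by
    rw [hF.eq_self _ z hz, Homeomorph.inv_apply, Homeomorph.symm_apply_eq, ← hf, hF.eq_self _ z hz]
  one_apply z := by
    rw [unitInterval.symm_one, hf, Homeomorph.inv_apply, Homeomorph.symm_apply_apply]

/-- The homeomorphisms of the plane that are isotopic to the identity by an isotopy which fixes a
neighbourhood of infinity and rotates a neighbourhood of the origin. -/
def annularIsotopyGroup : Subgroup (ℂ ≃ₜ ℂ) where
  carrier := {f | ∃ F r R, 0 < r ∧ IsAnnularIsotopy F r R ∧ ∀ z, F (0, z) = f z}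
  one_mem' := ⟨Prod.snd, 1, 0, one_pos, ⟨continuous_snd, fun _ ↦ Function.bijective_id,
    fun _ ↦ ⟨1, by simp⟩, fun _ _ _ ↦ rfl, fun _ ↦ rfl⟩, fun _ ↦ rfl⟩
  mul_mem' := by
    rintro f g ⟨F, r, R, hr, hF, hf⟩ ⟨G, r', R', hr', hG, hg⟩
    exact ⟨_, _, _, lt_min hr hr', hF.comp hG, fun z ↦ by
      rw [hg, hf, Homeomorph.mul_apply]⟩
  inv_mem' := by
    rintro f ⟨F, r, R, hr, hF, hf⟩
    exact ⟨_, r, R, hr, hF.inv hf, fun z ↦ by rw [unitInterval.symm_zero, hF.one_apply]⟩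

lemma exists_rotation_of_mem_annularIsotopyGroup {f : ℂ ≃ₜ ℂ} (hf : f ∈ annularIsotopyGroup) :
    ∃ c : Circle, ∀ᶠ z in 𝓝 0, f z = c * z := by
  obtain ⟨F, r, R, hr, hF, hf⟩ := hf
  obtain ⟨c, hc⟩ := hF.rotates 0
  refine ⟨c, ?_⟩
  filter_upwards [closedBall_mem_nhds (0 : ℂ) hr] with z hz
  rw [← hf, hc z (mem_closedBall_zero_iff.1 hz)]

lemma exists_eq_self_of_mem_annularIsotopyGroup {f : ℂ ≃ₜ ℂ} (hf : f ∈ annularIsotopyGroup) :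
    ∃ R, ∀ z, R ≤ ‖z‖ → f z = z := by
  obtain ⟨F, r, R, -, hF, hf⟩ := hf
  exact ⟨R, fun z hz ↦ by rw [← hf, hF.eq_self 0 z hz]⟩

end AnnularIsotopies

section AlexanderTrick

variable {E : Type*} [NormedAddCommGroup E] [NormedSpace ℝ E]

/-- The Alexander isotopy, which shrinks `f` towards `x₀` by the factor `s`. For `s = 0` this is the
identity, whatever the value of `s⁻¹`. -/
noncomputable def alexander (f : E → E) (x₀ : E) (s : ℝ) (z : E) : E :=
  z + s • (f (x₀ + s⁻¹ • (z - x₀)) - (x₀ + s⁻¹ • (z - x₀)))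

lemma alexander_zero (f : E → E) (x₀ z : E) : alexander f x₀ 0 z = z := by
  rw [alexander, zero_smul, add_zero]

lemma alexander_one (f : E → E) (x₀ z : E) : alexander f x₀ 1 z = f z := by
  simp only [alexander, inv_one, one_smul, add_sub_cancel]

lemma alexander_eq_conj (f : E → E) (x₀ : E) {s : ℝ} (hs : s ≠ 0) (z : E) :
    alexander f x₀ s z = x₀ + s • (f (x₀ + s⁻¹ • (z - x₀)) - x₀) := by
  rw [alexander, smul_sub, smul_sub s (f _), smul_add, smul_inv_smul₀ hs]
  abel

lemma bijective_alexander {f : E → E} (hf : Function.Bijective f) (x₀ : E) (s : ℝ) :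
    Function.Bijective (alexander f x₀ s) := by
  rcases eq_or_ne s 0 with rfl | hs
  · rw [funext (alexander_zero f x₀)]
    exact Function.bijective_id
  · let d : E ≃ E := ((Equiv.subRight x₀).trans (MulAction.toPerm (Units.mk0 s hs))).trans
      (Equiv.addLeft x₀)
    have : alexander f x₀ s = d ∘ f ∘ d.symm := by
      ext z
      rw [alexander_eq_conj f x₀ hs]
      simp [d, Units.smul_def, sub_eq_neg_add, add_comm]
    rw [this]
    exact d.bijective.comp (hf.comp d.symm.bijective)

lemma continuous_alexander {f : E → E} (hf : Continuous f) {C : ℝ} (hC : ∀ z, ‖f z - z‖ ≤ C)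
    (x₀ : E) : Continuous fun p : ℝ × E ↦ alexander f x₀ p.1 p.2 := by
  refine continuous_iff_continuousAt.2 fun ⟨s, z⟩ ↦ ?_
  rcases eq_or_ne s 0 with rfl | hs
  · refine continuousAt_snd.add ?_
    rw [ContinuousAt, zero_smul]
    have hlim : Tendsto (fun p : ℝ × E ↦ ‖p.1‖ * C) (𝓝 (0, z)) (𝓝 0) := by
      have : Continuous fun p : ℝ × E ↦ ‖p.1‖ * C := by fun_prop
      simpa using this.tendsto (0, z)
    refine squeeze_zero_norm (fun p ↦ ?_) hlim
    rw [norm_smul]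
    gcongr
    exact hC _
  · have hinv : ContinuousAt (fun p : ℝ × E ↦ x₀ + p.1⁻¹ • (p.2 - x₀)) (s, z) :=
      continuousAt_const.add ((continuousAt_fst.inv₀ hs).smul (by fun_prop))
    exact continuousAt_snd.add (continuousAt_fst.smul
      ((hf.continuousAt.comp hinv).sub hinv))

lemma exists_mem_of_alexander_ne {f : E → E} {K : Set E} (hK : ∀ z ∉ K, f z = z) {x₀ z : E}
    {s : ℝ} (h : alexander f x₀ s z ≠ z) : ∃ y ∈ K, z = x₀ + s • (y - x₀) := by
  rcases eq_or_ne s 0 with rfl | hs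
  · exact absurd (alexander_zero f x₀ z) h
  · refine ⟨x₀ + s⁻¹ • (z - x₀), ?_, by rw [add_sub_cancel_left, smul_inv_smul₀ hs]; abel⟩
    by_contra hy
    exact h (by rw [alexander, hK _ hy, sub_self, smul_zero, add_zero])

lemma mem_annularIsotopyGroup_of_starConvex {S K : Set ℂ} {x₀ : ℂ} (hS : StarConvex ℝ x₀ S)
    (h0 : (0 : ℂ) ∉ S) (hK : IsCompact K) (hKS : K ⊆ S) {f : ℂ ≃ₜ ℂ} (hf : ∀ z ∉ K, f z = z) :
    f ∈ annularIsotopyGroup := by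
  obtain ⟨C, hC⟩ := exists_norm_sub_le_of_compact_support f.continuous hK hf
  let cone : Set ℂ := (fun p : I × ℂ ↦ x₀ + (p.1 : ℝ) • (p.2 - x₀)) '' (univ ×ˢ K)
  have hcone : IsCompact cone := (isCompact_univ.prod hK).image (by fun_prop)
  have hcone0 : (0 : ℂ) ∉ cone := by
    rintro ⟨⟨s, y⟩, ⟨-, hy⟩, h⟩
    exact h0 (h ▸ hS.add_smul_sub_mem (hKS hy) s.2.1 s.2.2)
  have hfix (t : I) (z : ℂ) (hz : z ∉ cone) :
      alexander f x₀ (unitInterval.symm t) z = z := by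
    by_contra h
    obtain ⟨y, hy, rfl⟩ := exists_mem_of_alexander_ne hf h
    exact hz ⟨(unitInterval.symm t, y), ⟨mem_univ _, hy⟩, rfl⟩
  obtain ⟨r, hr, hr0⟩ := nhds_basis_closedBall.mem_iff.1
    (hcone.isClosed.isOpen_compl.mem_nhds hcone0)
  obtain ⟨R, hR⟩ := hcone.isBounded.exists_norm_le
  have hcont : Continuous fun p : I × ℂ ↦ ((unitInterval.symm p.1 : ℝ), p.2) := by fun_prop
  refine ⟨fun p ↦ alexander f x₀ (unitInterval.symm p.1) p.2, r, R + 1, hr,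
    ⟨(continuous_alexander f.continuous hC x₀).comp hcont,
      fun t ↦ bijective_alexander f.bijective x₀ (unitInterval.symm t), fun t ↦ ⟨1, fun z hz ↦ ?_⟩,
      fun t z hz ↦ ?_, fun z ↦ ?_⟩, fun z ↦ ?_⟩
  · rw [hfix t z (hr0 (mem_closedBall_zero_iff.2 hz)), Circle.coe_one, one_mul]
  · exact hfix t z fun h ↦ by linarith [hR z h]
  · simp only [unitInterval.symm_one, Icc.coe_zero, alexander_zero]
  · simp only [unitInterval.symm_zero, Icc.coe_one, alexander_one]

end AlexanderTrick

section HolePush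

/-- `w` drags the hole of the annulus from `x` to `y`: after both points are moved to the origin,
`w` becomes isotopic to the identity. -/
def HolePush (x y : ℂ) (w : ℂ ≃ₜ ℂ) : Prop :=
  recenter y * w * (recenter x)⁻¹ ∈ annularIsotopyGroup

namespace HolePush

variable {x y z : ℂ} {w w' : ℂ ≃ₜ ℂ}

lemma refl (x : ℂ) : HolePush x x 1 := by
  rw [HolePush, mul_one, mul_inv_cancel]
  exact one_mem _

lemma symm (h : HolePush x y w) : HolePush y x w⁻¹ := by
  simpa only [HolePush, mul_inv_rev, inv_inv, mul_assoc] using inv_mem h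

lemma trans (h : HolePush x y w) (h' : HolePush y z w') : HolePush x z (w' * w) := by
  simpa only [HolePush, mul_assoc, inv_mul_cancel_left] using mul_mem h' h

lemma exists_rotation (h : HolePush x y w) :
    ∃ c : Circle, ∀ᶠ z in 𝓝 0, w (x + z) = y + c * z := by
  obtain ⟨c, hc⟩ := exists_rotation_of_mem_annularIsotopyGroup h
  refine ⟨c, ?_⟩
  filter_upwards [hc, closedBall_mem_nhds (0 : ℂ) one_pos] with z hz hz1
  rw [mem_closedBall_zero_iff] at hz1
  rw [Homeomorph.mul_apply, Homeomorph.mul_apply, inv_recenter_of_norm_le hz1] at hz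
  rw [← inv_recenter_of_norm_le (z := c * z) (by rwa [norm_mul, Circle.norm_coe, one_mul]), ← hz,
    Homeomorph.inv_apply, Homeomorph.symm_apply_apply]

lemma apply_eq (h : HolePush x y w) : w x = y := by
  obtain ⟨c, hc⟩ := h.exists_rotation
  simpa only [add_zero, mul_zero] using hc.self_of_nhds

end HolePush

lemma holePush_of_isotopy {W : I × ℂ → ℂ} {w : ℂ ≃ₜ ℂ} {x : ℂ} {r R : ℝ} (hr : 0 < r)
    (hW : Continuous W) (hbij : ∀ t, Function.Bijective fun z ↦ W (t, z))
    (hx : ∀ t, ∃ c : Circle, ∀ z, ‖z‖ ≤ r → W (t, x + z) = W (t, x) + c * z)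
    (hR : ∀ t z, R ≤ ‖z‖ → W (t, z) = z) (h0 : ∀ z, W (0, z) = w z) (h1 : ∀ z, W (1, z) = z) :
    HolePush x (w x) w := by
  have hpath : Continuous fun t ↦ W (t, x) := by fun_prop
  obtain ⟨M, hM⟩ := (isCompact_range hpath).isBounded.exists_norm_le
  have hrec : Continuous fun p : I × ℂ ↦ (p.1, (recenter x)⁻¹ p.2) :=
    continuous_fst.prodMk ((recenter x)⁻¹.continuous.comp continuous_snd)
  have hcont : Continuous fun p : I × ℂ ↦
      recenter (W (p.1, x)) (W (p.1, (recenter x)⁻¹ p.2)) :=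
    continuous_recenter (hpath.comp continuous_fst) (hW.comp hrec)
  have hbij' (t : I) :
      Function.Bijective fun z ↦ recenter (W (t, x)) (W (t, (recenter x)⁻¹ z)) :=
    (recenter _).bijective.comp ((hbij t).comp (recenter x)⁻¹.bijective)
  refine ⟨_, min r 1, max R (max (3 * (1 + ‖x‖)) (3 * (1 + M))), lt_min hr one_pos,
    ⟨hcont, hbij', fun t ↦ ?_, fun t z hz ↦ ?_, fun z ↦ ?_⟩, fun z ↦ ?_⟩
  · obtain ⟨c, hc⟩ := hx t
    refine ⟨c, fun z hz ↦ ?_⟩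
    simp only [inv_recenter_of_norm_le (hz.trans (min_le_right _ _)),
      hc z (hz.trans (min_le_left _ _))]
    rw [recenter_add_of_norm_le]
    rw [norm_mul, Circle.norm_coe, one_mul]
    exact hz.trans (min_le_right _ _)
  · obtain ⟨hzR, hzx, hzM⟩ : R ≤ ‖z‖ ∧ 3 * (1 + ‖x‖) ≤ ‖z‖ ∧ 3 * (1 + M) ≤ ‖z‖ := by
      simpa only [max_le_iff] using hz
    simp only [inv_recenter_of_le_norm hzx, hR t z hzR]
    exact recenter_of_le_norm (by linarith [hM _ (mem_range_self t)])
  · simp only [h1, Homeomorph.inv_apply, Homeomorph.apply_symm_apply]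
  · simp only [h0, Homeomorph.mul_apply]

lemma holePush_push {x v : ℂ} {ρ : ℝ} (hv : ‖v‖ < 2 * ρ) :
    HolePush x (x + v) (push x ρ v hv) := by
  have hρ : 0 < ρ := by linarith [norm_nonneg v]
  have hvt (t : I) : ‖((unitInterval.symm t : ℝ) • v)‖ < 2 * ρ := by
    refine lt_of_le_of_lt ?_ hv
    rw [norm_smul, Real.norm_of_nonneg (unitInterval.symm t).2.1]
    exact mul_le_of_le_one_left (norm_nonneg v) (unitInterval.symm t).2.2
  have hplateau : Continuous fun p : I × ℂ ↦ plateau x ρ p.2 :=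
    continuous_plateau continuous_const continuous_const continuous_snd fun _ ↦ hρ.ne'
  have hx : push x ρ v hv x = x + v := by
    rw [push_apply, plateau_eq_one hρ (by simpa using hρ.le), one_smul]
  rw [← hx]
  refine holePush_of_isotopy
    (W := fun p ↦ p.2 + plateau x ρ p.2 • ((unitInterval.symm p.1 : ℝ) • v)) hρ
    (by fun_prop) (fun t ↦ (push x ρ _ (hvt t)).bijective) (fun t ↦ ⟨1, fun z hz ↦ ?_⟩)
    (R := ‖x‖ + 3 * ρ) (fun t z hz ↦ ?_) (fun z ↦ ?_) (fun z ↦ ?_)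
  · simp only
    rw [plateau_eq_one hρ (by rwa [add_sub_cancel_left]), plateau_eq_one hρ (by simpa using hρ.le),
      Circle.coe_one, one_mul]
    abel
  · simp only
    rw [plateau_eq_zero hρ (by linarith [norm_sub_norm_le z x]), zero_smul, add_zero]
  · simp only [unitInterval.symm_zero, Icc.coe_one, one_smul, push_apply]
  · simp only [unitInterval.symm_one, Icc.coe_zero, zero_smul, smul_zero, add_zero]

lemma plateau_add_circle_mul (x z : ℂ) (ρ : ℝ) (c : Circle) :
    plateau x ρ (x + c * (z - x)) = plateau x ρ z := by
  rw [plateau, add_sub_cancel_left, norm_mul, Circle.norm_coe, one_mul, plateau]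

/-- The homeomorphism that rotates the closed disc of radius `ρ` about `x` by the angle `θ` and is
the identity outside the disc of radius `3 * ρ`. -/
noncomputable def twist (x : ℂ) (ρ θ : ℝ) : ℂ ≃ₜ ℂ where
  toFun z := x + Circle.exp (θ * plateau x ρ z) * (z - x)
  invFun z := x + Circle.exp (-θ * plateau x ρ z) * (z - x)
  left_inv z := by
    beta_reduce
    rw [plateau_add_circle_mul, add_sub_cancel_left, ← mul_assoc, ← Circle.coe_mul,
      ← Circle.exp_add, neg_mul, neg_add_cancel, Circle.exp_zero, Circle.coe_one, one_mul,
      add_sub_cancel]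
  right_inv z := by
    beta_reduce
    rw [plateau_add_circle_mul, add_sub_cancel_left, ← mul_assoc, ← Circle.coe_mul,
      ← Circle.exp_add, neg_mul, add_neg_cancel, Circle.exp_zero, Circle.coe_one, one_mul,
      add_sub_cancel]
  continuous_toFun := by
    unfold plateau
    fun_prop
  continuous_invFun := by
    unfold plateau
    fun_prop

lemma twist_apply (x : ℂ) (ρ θ : ℝ) (z : ℂ) :
    twist x ρ θ z = x + Circle.exp (θ * plateau x ρ z) * (z - x) := rfl

lemma norm_twist_sub (x : ℂ) (ρ θ : ℝ) (z : ℂ) : ‖twist x ρ θ z - x‖ = ‖z - x‖ := by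
  rw [twist_apply, add_sub_cancel_left, norm_mul, Circle.norm_coe, one_mul]

lemma twist_of_norm_le {x z : ℂ} {ρ : ℝ} (hρ : 0 < ρ) (θ : ℝ) (hz : ‖z - x‖ ≤ ρ) :
    twist x ρ θ z = x + Circle.exp θ * (z - x) := by
  rw [twist_apply, plateau_eq_one hρ hz, mul_one]

lemma twist_of_le_norm {x z : ℂ} {ρ : ℝ} (hρ : 0 < ρ) (θ : ℝ) (hz : 3 * ρ ≤ ‖z - x‖) :
    twist x ρ θ z = z := by
  rw [twist_apply, plateau_eq_zero hρ hz, mul_zero, Circle.exp_zero, Circle.coe_one, one_mul,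
    add_sub_cancel]

lemma holePush_twist (x : ℂ) {ρ : ℝ} (hρ : 0 < ρ) (θ : ℝ) : HolePush x x (twist x ρ θ) := by
  have htwist (θ : ℝ) : twist x ρ θ x = x := by rw [twist_apply, sub_self, mul_zero, add_zero]
  have hplateau : Continuous fun p : I × ℂ ↦ plateau x ρ p.2 :=
    continuous_plateau continuous_const continuous_const continuous_snd fun _ ↦ hρ.ne'
  have hcont : Continuous fun p : I × ℂ ↦ twist x ρ ((unitInterval.symm p.1 : ℝ) * θ) p.2 := by
    simp only [twist_apply]
    fun_prop
  suffices HolePush x (twist x ρ θ x) (twist x ρ θ) by rwa [htwist] at this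
  refine holePush_of_isotopy hρ hcont
    (fun t ↦ (twist x ρ ((unitInterval.symm t : ℝ) * θ)).bijective)
    (fun t ↦ ⟨Circle.exp ((unitInterval.symm t : ℝ) * θ), fun z hz ↦ ?_⟩)
    (R := ‖x‖ + 3 * ρ) (fun t z hz ↦ ?_) (fun z ↦ ?_) (fun z ↦ ?_)
  · simp only
    rw [twist_of_norm_le hρ _ (by rwa [add_sub_cancel_left]), htwist, add_sub_cancel_left]
  · exact twist_of_le_norm hρ _ (by linarith [norm_sub_norm_le z x])
  · simp only [unitInterval.symm_zero, Icc.coe_one, one_mul]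
  · simp only [unitInterval.symm_one, Icc.coe_zero, zero_mul, twist_apply, Circle.exp_zero,
      Circle.coe_one, one_mul, add_sub_cancel]

end HolePush

section SimplePolyline

variable {E : Type*} [NormedAddCommGroup E] [NormedSpace ℝ E]

/-- `SimplePolyline v w T` states that `T` is the trace of a polygonal path from `v` to `w` without
self-intersections. -/
inductive SimplePolyline : E → E → Set E → Prop
  | point (v : E) : SimplePolyline v v {v}
  | cons {u v w : E} {T : Set E} (hT : SimplePolyline v w T) (huv : u ≠ v)
      (h : segment ℝ u v ∩ T ⊆ {v}) : SimplePolyline u w (segment ℝ u v ∪ T)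

lemma isCompact_segment (u v : E) : IsCompact (segment ℝ u v) := by
  rw [segment_eq_image_lineMap]
  exact isCompact_Icc.image AffineMap.lineMap_continuous

namespace SimplePolyline

variable {v w : E} {T : Set E}

lemma isCompact (hT : SimplePolyline v w T) : IsCompact T := by
  induction hT with
  | point v => exact isCompact_singleton
  | cons _ _ _ ih => exact (isCompact_segment _ _).union ih

lemma left_mem (hT : SimplePolyline v w T) : v ∈ T := by
  cases hT with
  | point => rfl
  | cons => exact .inl (left_mem_segment ℝ _ _)

lemma right_mem (hT : SimplePolyline v w T) : w ∈ T := by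
  induction hT with
  | point => rfl
  | cons _ _ _ ih => exact .inr ih

lemma exists_subset_of_mem (hT : SimplePolyline v w T) {q : E} (hq : q ∈ T) :
    ∃ T' ⊆ T, SimplePolyline q w T' := by
  induction hT with
  | point v => exact ⟨{v}, Subset.rfl, hq ▸ point v⟩
  | @cons u v w T hT _ h ih =>
    by_cases hqT : q ∈ T
    · obtain ⟨T', hT', hqw⟩ := ih hqT
      exact ⟨T', hT'.trans subset_union_right, hqw⟩
    · have hqv : q ≠ v := fun h' ↦ hqT (h' ▸ hT.left_mem)
      have hsub : segment ℝ q v ⊆ segment ℝ u v :=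
        (convex_segment u v).segment_subset (hq.resolve_right hqT) (right_mem_segment ℝ u v)
      exact ⟨_, union_subset_union_left T hsub,
        hT.cons hqv ((inter_subset_inter_left T hsub).trans h)⟩

lemma exists_first_mem_segment {T : Set E} (hT : IsCompact T) {u v : E} (hv : v ∈ T) :
    ∃ q ∈ segment ℝ u v ∩ T, segment ℝ u q ∩ T ⊆ {q} := by
  have hcont : Continuous (AffineMap.lineMap (k := ℝ) u v) := AffineMap.lineMap_continuous
  obtain ⟨s, ⟨hs, hsT⟩, hmin⟩ :=
    (isCompact_Icc.inter_right (hT.isClosed.preimage hcont)).exists_isLeast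
      (⟨1, right_mem_Icc.2 zero_le_one, by simpa using hv⟩ :
        (Icc (0 : ℝ) 1 ∩ AffineMap.lineMap (k := ℝ) u v ⁻¹' T).Nonempty)
  refine ⟨AffineMap.lineMap u v s,
    ⟨segment_eq_image_lineMap ℝ u v ▸ mem_image_of_mem _ hs, hsT⟩, ?_⟩
  rintro p ⟨hp, hpT⟩
  rw [segment_eq_image_lineMap] at hp
  obtain ⟨a, ha, rfl⟩ := hp
  have hmul : AffineMap.lineMap u (AffineMap.lineMap (k := ℝ) u v s) a
      = AffineMap.lineMap (k := ℝ) u v (a * s) := by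
    simp only [AffineMap.lineMap_apply, vsub_eq_sub, vadd_eq_add, add_sub_cancel_right, smul_smul]
  rw [hmul] at hpT ⊢
  have has : a * s ≤ s := mul_le_of_le_one_left hs.1 ha.2
  rw [le_antisymm has (hmin ⟨⟨mul_nonneg ha.1 hs.1, has.trans hs.2⟩, hpT⟩), mem_singleton_iff]

lemma exists_cons (hT : SimplePolyline v w T) (u : E) :
    ∃ T' ⊆ segment ℝ u v ∪ T, SimplePolyline u w T' := by
  obtain ⟨q, ⟨hq, hqT⟩, hfirst⟩ := exists_first_mem_segment hT.isCompact hT.left_mem (u := u)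
  obtain ⟨T', hT', hqw⟩ := hT.exists_subset_of_mem hqT
  rcases eq_or_ne u q with rfl | huq
  · exact ⟨T', hT'.trans subset_union_right, hqw⟩
  · have hsub : segment ℝ u q ⊆ segment ℝ u v :=
      (convex_segment u v).segment_subset (left_mem_segment ℝ u v) hq
    exact ⟨_, union_subset_union hsub hT',
      hqw.cons huq ((inter_subset_inter_right _ hT').trans hfirst)⟩

lemma exists_of_isPreconnected {Γ S : Set E} (hΓ : IsPreconnected Γ) (hS : Γ ⊆ interior S)
    {a b : E} (ha : a ∈ Γ) (hb : b ∈ Γ) (hTS : T ⊆ S) (hT : SimplePolyline a w T) :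
    ∃ T ⊆ S, SimplePolyline b w T := by
  let Reaches (x : E) : Prop := ∃ T ⊆ S, SimplePolyline x w T
  have hstep {x y : E} (hxy : segment ℝ x y ⊆ S) : Reaches y → Reaches x := by
    rintro ⟨T, hTS, hT⟩
    obtain ⟨T', hT', hx⟩ := hT.exists_cons x
    exact ⟨T', hT'.trans (union_subset hxy hTS), hx⟩
  have hlocal : ∀ x ∈ Γ, ∀ᶠ y in 𝓝[Γ] x, (Reaches x ↔ Reaches y) := by
    intro x hx
    obtain ⟨ρ, hρ, hball⟩ := Metric.mem_nhds_iff.1 (mem_interior_iff_mem_nhds.1 (hS hx))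
    filter_upwards [nhdsWithin_le_nhds (ball_mem_nhds x hρ)] with y hy
    have hxy : segment ℝ x y ⊆ S :=
      ((convex_ball x ρ).segment_subset (mem_ball_self hρ) hy).trans hball
    exact ⟨hstep (segment_symm ℝ x y ▸ hxy), hstep hxy⟩
  exact (hΓ.induction₂ (fun x y ↦ (Reaches x ↔ Reaches y)) hlocal
    (fun _ _ _ _ _ _ ↦ Iff.trans) (fun _ _ _ _ ↦ Iff.symm) ha hb).1 ⟨T, hTS, hT⟩

end SimplePolyline

end SimplePolyline

section SegmentPush

/-- The homeomorphisms that are the identity off `U` and move every point parallel to `ℓ`. -/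
def displacementGroup {E : Type*} [NormedAddCommGroup E] [NormedSpace ℝ E] (U : Set E) (ℓ : E) :
    Subgroup (E ≃ₜ E) where
  carrier := {w | (∀ z ∉ U, w z = z) ∧ ∀ z, ∃ s : ℝ, w z = z + s • ℓ}
  one_mem' := ⟨fun _ _ ↦ rfl, fun z ↦ ⟨0, by rw [zero_smul, add_zero, Homeomorph.one_apply]⟩⟩
  mul_mem' := by
    rintro w w' ⟨hwU, hws⟩ ⟨hwU', hws'⟩
    refine ⟨fun z hz ↦ by rw [Homeomorph.mul_apply, hwU' z hz, hwU z hz], fun z ↦ ?_⟩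
    obtain ⟨s', hs'⟩ := hws' z
    obtain ⟨s, hs⟩ := hws (w' z)
    exact ⟨s' + s, by rw [Homeomorph.mul_apply, hs, hs', add_smul, add_assoc]⟩
  inv_mem' := by
    rintro w ⟨hwU, hws⟩
    refine ⟨fun z hz ↦ by rw [Homeomorph.inv_apply, Homeomorph.symm_apply_eq, hwU z hz],
      fun z ↦ ?_⟩
    obtain ⟨s, hs⟩ := hws (w⁻¹ z)
    rw [Homeomorph.inv_apply, Homeomorph.apply_symm_apply] at hs
    exact ⟨-s, by rw [neg_smul, eq_add_neg_iff_add_eq]; exact hs.symm⟩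

lemma exists_holePush_segment {v v' : ℂ} {U : Set ℂ} (hU : IsOpen U) (hvU : segment ℝ v v' ⊆ U) :
    ∃ w ∈ displacementGroup U (v' - v), HolePush v v' w := by
  have hlocal : ∀ a ∈ segment ℝ v v', ∀ᶠ b in 𝓝[segment ℝ v v'] a,
      ∃ w ∈ displacementGroup U (v' - v), HolePush a b w := by
    intro a ha
    obtain ⟨ρ, hρ, hball⟩ := Metric.isOpen_iff.1 hU a (hvU ha)
    filter_upwards [self_mem_nhdsWithin, nhdsWithin_le_nhds (ball_mem_nhds a (by positivity :
      0 < 2 * (ρ / 3)))] with b hb hab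
    obtain ⟨s, hs⟩ : ∃ s : ℝ, b - a = s • (v' - v) := by
      rw [segment_eq_image'] at ha hb
      obtain ⟨s, -, rfl⟩ := ha
      obtain ⟨s', -, rfl⟩ := hb
      exact ⟨s' - s, by rw [sub_smul, add_sub_add_left_eq_sub]⟩
    rw [mem_ball_iff_norm] at hab
    refine ⟨push a (ρ / 3) (b - a) hab, ⟨fun z hz ↦ ?_, fun z ↦ ?_⟩, ?_⟩
    · rw [push_apply, plateau_eq_zero (by positivity), zero_smul, add_zero]
      by_contra! h
      exact hz (hball (mem_ball_iff_norm.2 (by linarith)))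
    · exact ⟨_, by rw [push_apply, hs, smul_smul]⟩
    · simpa only [add_sub_cancel] using holePush_push (x := a) hab
  refine (convex_segment v v').isPreconnected.induction₂
    (fun a b ↦ ∃ w ∈ displacementGroup U (v' - v), HolePush a b w) hlocal ?_ ?_
    (left_mem_segment ℝ v v') (right_mem_segment ℝ v v')
  · rintro a b c - - - ⟨w, hwU, hw⟩ ⟨w', hwU', hw'⟩
    exact ⟨w' * w, mul_mem hwU' hwU, hw.trans hw'⟩
  · rintro a b - - ⟨w, hwU, hw⟩
    exact ⟨w⁻¹, inv_mem hwU, hw.symm⟩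

lemma strictMono_of_injective_of_eventually_eq_self {φ : ℝ → ℝ} (hφ : Continuous φ)
    (hinj : Function.Injective φ) (hfix : ∀ᶠ s in atTop, φ s = s) : StrictMono φ := by
  refine (hφ.strictMono_of_inj hinj).resolve_right fun hanti ↦ ?_
  obtain ⟨s, hs⟩ := eventually_atTop.1 hfix
  have := hanti (lt_add_one s)
  rw [hs s le_rfl, hs (s + 1) (by linarith)] at this
  linarith

lemma exists_strictMono_of_displacement_along {w : ℂ ≃ₜ ℂ} {v ℓ : ℂ} (hℓ : ℓ ≠ 0)
    (hw : ∀ z, ∃ s : ℝ, w z = z + s • ℓ) {R : ℝ} (hR : ∀ z, R ≤ ‖z‖ → w z = z) :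
    ∃ φ : ℝ → ℝ, StrictMono φ ∧ ∀ s : ℝ, w (v + s • ℓ) = v + φ s • ℓ := by
  choose k hk using hw
  let φ (s : ℝ) : ℝ := s + k (v + s • ℓ)
  have hφ (s : ℝ) : w (v + s • ℓ) = v + φ s • ℓ := by rw [hk, add_assoc, ← add_smul]
  have hφ' (s : ℝ) : φ s = ((w (v + s • ℓ) - v) / ℓ).re := by
    rw [hφ, add_sub_cancel_left, Complex.real_smul, mul_div_cancel_right₀ _ hℓ, Complex.ofReal_re]
  refine ⟨φ, strictMono_of_injective_of_eventually_eq_self ?_ (fun s s' h ↦ ?_) ?_, hφ⟩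
  · rw [funext hφ']
    fun_prop
  · have : v + s • ℓ = v + s' • ℓ := w.injective (by rw [hφ, hφ, h])
    exact smul_left_injective ℝ hℓ (add_left_cancel this)
  · filter_upwards [eventually_ge_atTop ((R + ‖v‖) / ‖ℓ‖), eventually_ge_atTop 0] with s hs hs0
    have hnorm : R ≤ ‖v + s • ℓ‖ := by
      have h1 : R + ‖v‖ ≤ s * ‖ℓ‖ := (div_le_iff₀ (norm_pos_iff.2 hℓ)).1 hs
      have h2 := norm_sub_norm_le (s • ℓ) (-v)
      rw [norm_smul, Real.norm_of_nonneg hs0, norm_neg, sub_neg_eq_add, add_comm] at h2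
      rw [add_comm] at h2 ⊢
      linarith
    rw [hφ', hR _ hnorm, add_sub_cancel_left, Complex.real_smul, mul_div_cancel_right₀ _ hℓ,
      Complex.ofReal_re]

end SegmentPush

section RayPush

/-- The closed ray of the real axis that ends at `p` and comes from `-∞`. -/
def leftRay (p : ℝ) : Set ℂ := Complex.ofReal '' Iic p

lemma isClosed_leftRay (p : ℝ) : IsClosed (leftRay p) :=
  Complex.isUniformEmbedding_ofReal.isClosedEmbedding.isClosedMap _ isClosed_Iic

lemma HolePush.exists_eq_sub_of_mem_image_leftRay {p : ℝ} {v : ℂ} {W : ℂ ≃ₜ ℂ}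
    (hW : HolePush p v W) : ∃ r > 0, ∃ c : Circle, ∀ a ∈ W '' leftRay p, ‖a - v‖ ≤ r →
      ∃ s : ℝ, 0 ≤ s ∧ a = v - s * c := by
  obtain ⟨c, hc⟩ := hW.exists_rotation
  obtain ⟨r, hr, hball⟩ := nhds_basis_closedBall.mem_iff.1 hc
  refine ⟨r, hr, c, ?_⟩
  rintro _ ⟨_, ⟨q, hq, rfl⟩, rfl⟩ hqr
  have hmem : (c⁻¹ : Circle) * (W q - v) ∈ closedBall (0 : ℂ) r := by
    rwa [mem_closedBall_zero_iff, norm_mul, Circle.norm_coe, one_mul]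
  have hWq : W (p + (c⁻¹ : Circle) * (W q - v)) = W q := by
    rw [hball hmem, ← mul_assoc, ← Circle.coe_mul, mul_inv_cancel, Circle.coe_one, one_mul,
      add_sub_cancel]
  refine ⟨p - q, sub_nonneg.2 hq, ?_⟩
  have hq' : (q : ℂ) - p = (c⁻¹ : Circle) * (W q - v) := by
    rw [sub_eq_iff_eq_add']
    exact (W.injective hWq).symm
  calc W q = v + (c * c⁻¹ : Circle) * (W q - v) := by
        rw [mul_inv_cancel, Circle.coe_one, one_mul, add_sub_cancel]
    _ = v + c * (q - p) := by rw [hq', Circle.coe_mul, mul_assoc]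
    _ = v - (p - q : ℝ) * c := by push_cast; ring

lemma image_mul_homeomorph {X : Type*} [TopologicalSpace X] (f g : X ≃ₜ X) (s : Set X) :
    (f * g : X ≃ₜ X) '' s = f '' (g '' s) := by
  rw [image_image]
  rfl

lemma circle_exp_mul_ne_neg {θ η : ℝ} (hθ : |θ| ≤ Real.pi) (hη0 : 0 < η) (hη1 : η ≤ 1) :
    (Circle.exp (θ * η) : ℂ) ≠ -Circle.exp θ := by
  intro h
  have habs : |θ * (1 - η)| < Real.pi := by
    rw [abs_mul, abs_of_nonneg (by linarith : 0 ≤ 1 - η)]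
    nlinarith [Real.pi_pos, abs_nonneg θ]
  obtain ⟨hlo, hhi⟩ := abs_lt.1 habs
  have hneg : (Circle.exp (θ * (1 - η)) : ℂ) = -1 := by
    rw [show θ * (1 - η) = θ - θ * η by ring, Circle.exp_sub, Circle.coe_div, h, div_neg,
      div_self (Circle.coe_ne_zero _)]
  have harg := Circle.arg_exp hlo hhi.le
  rw [hneg, Complex.arg_neg_one] at harg
  exact hhi.ne harg.symm

lemma twist_eq_of_mem_segment {A : Set ℂ} {v v' : ℂ} {c : Circle} {s θ ρ : ℝ} (hs : 0 ≤ s)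
    (hA : A ∩ segment ℝ v v' ⊆ {v}) (ha : v - s * c ∈ A) (hθ : |θ| ≤ Real.pi) {ℓ : ℝ} (hℓ : 0 ≤ ℓ)
    (hv' : v' - v = ℓ * (Circle.exp θ * c)) (hseg : twist v ρ θ (v - s * c) ∈ segment ℝ v v') :
    twist v ρ θ (v - s * c) = v := by
  have htwist : twist v ρ θ (v - s * c)
      = v + s * (-Circle.exp (θ * plateau v ρ (v - s * c)) * c) := by
    rw [twist_apply, sub_sub_cancel_left]
    ring
  rcases (plateau_nonneg v ρ (v - s * c)).eq_or_lt with hη | hη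
  · have hfix : twist v ρ θ (v - s * c) = v - s * c := by
      rw [htwist, ← hη, mul_zero, Circle.exp_zero, Circle.coe_one]
      ring
    rw [hfix] at hseg ⊢
    exact hA ⟨ha, hseg⟩
  · rw [segment_eq_image'] at hseg
    obtain ⟨u, ⟨hu, -⟩, hu'⟩ := hseg
    have hdir : (s : ℂ) * -Circle.exp (θ * plateau v ρ (v - s * c)) =
        (u * ℓ : ℝ) * Circle.exp θ := by
      beta_reduce at hu'
      rw [htwist, hv', Complex.real_smul, add_right_inj] at hu'
      refine mul_right_cancel₀ (Circle.coe_ne_zero c) ?_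
      rw [Complex.ofReal_mul]
      linear_combination -hu'
    have hsu : s = u * ℓ := by
      have := congrArg (‖·‖) hdir
      simpa only [norm_mul, norm_neg, Circle.norm_coe, Complex.norm_real, mul_one,
        Real.norm_of_nonneg hs, norm_mul, Real.norm_of_nonneg (mul_nonneg hu hℓ)] using this
    have hs0 : s = 0 := by
      by_contra hs0
      rw [← hsu] at hdir
      have := mul_left_cancel₀ (Complex.ofReal_ne_zero.2 hs0) hdir
      exact circle_exp_mul_ne_neg hθ hη (plateau_le_one _ _ _) (by rw [← this, neg_neg])
    rw [htwist, hs0, Complex.ofReal_zero, zero_mul, add_zero]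

/-- `A` arrives at `v` along the straight continuation of the segment from `v'` to `v`. -/
def StraightAt (A : Set ℂ) (v v' : ℂ) : Prop :=
  ∃ r > 0, ∀ a ∈ A, ‖a - v‖ ≤ r → ∃ s : ℝ, 0 ≤ s ∧ a = v - s • (v' - v)

lemma HolePush.exists_straightAt {p : ℝ} {v v' : ℂ} {W : ℂ ≃ₜ ℂ} (hW : HolePush p v W)
    (hv : v ≠ v') (hA : W '' leftRay p ∩ segment ℝ v v' ⊆ {v}) {ρ : ℝ} (hρ : 0 < ρ) :
    ∃ W₁, HolePush p v W₁ ∧ W₁ '' leftRay p ⊆ W '' leftRay p ∪ ball v ρ ∧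
      W₁ '' leftRay p ∩ segment ℝ v v' ⊆ {v} ∧ StraightAt (W₁ '' leftRay p) v v' := by
  obtain ⟨r, hr, c, hc⟩ := hW.exists_eq_sub_of_mem_image_leftRay
  obtain ⟨ρ₁, hρ₁, hρr, hρρ⟩ : ∃ ρ₁ > 0, 3 * ρ₁ ≤ r ∧ 3 * ρ₁ ≤ ρ :=
    ⟨min r ρ / 3, by positivity, by linarith [min_le_left r ρ], by linarith [min_le_right r ρ]⟩
  set d : Circle := Circle.exp (v' - v).arg
  have hd : v' - v = ‖v' - v‖ * d := by
    rw [Circle.coe_exp, Complex.norm_mul_exp_arg_mul_I]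
  set θ : ℝ := Complex.arg (d / c : Circle)
  have hθc : (Circle.exp θ * c : ℂ) = d := by
    rw [Circle.exp_arg, ← Circle.coe_mul, div_mul_cancel]
  have hℓ : (0 : ℝ) < ‖v' - v‖ := norm_pos_iff.2 (sub_ne_zero.2 hv.symm)
  refine ⟨twist v ρ₁ θ * W, hW.trans (holePush_twist v hρ₁ θ), ?_, ?_, ρ₁, hρ₁, ?_⟩ <;>
    rw [image_mul_homeomorph]
  · rintro _ ⟨a, ha, rfl⟩
    rcases lt_or_ge ‖a - v‖ (3 * ρ₁) with h | h
    · exact .inr (mem_ball_iff_norm.2 (by rw [norm_twist_sub]; exact h.trans_le hρρ))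
    · exact .inl (by rwa [twist_of_le_norm hρ₁ θ h])
  · rintro _ ⟨⟨a, ha, rfl⟩, hseg⟩
    rcases lt_or_ge ‖a - v‖ (3 * ρ₁) with h | h
    · obtain ⟨s, hs, rfl⟩ := hc a ha (h.le.trans hρr)
      exact twist_eq_of_mem_segment hs hA ha (Complex.abs_arg_le_pi _) hℓ.le
        (by rw [hθc]; exact hd) hseg
    · rw [twist_of_le_norm hρ₁ θ h] at hseg ⊢
      exact hA ⟨ha, hseg⟩
  · rintro _ ⟨a, ha, rfl⟩ h
    rw [norm_twist_sub] at h
    obtain ⟨s, hs, rfl⟩ := hc a ha (by linarith)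
    refine ⟨s / ‖v' - v‖, by positivity, ?_⟩
    have hs : ((s / ‖v' - v‖ : ℝ) : ℂ) * ‖v' - v‖ = s := by
      rw [← Complex.ofReal_mul, div_mul_cancel₀ _ hℓ.ne']
    rw [twist_of_norm_le hρ₁ θ h, Complex.real_smul]
    linear_combination (-(s : ℂ)) * hθc + ((s / ‖v' - v‖ : ℝ) : ℂ) * hd + (d : ℂ) * hs

lemma mem_segment_or_mem_ball_of_mem_thickening {v v' : ℂ} {ρ u : ℝ} (hu : u ≤ 1)
    (h : v + u • (v' - v) ∈ thickening ρ (segment ℝ v v')) :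
    v + u • (v' - v) ∈ ball v ρ ∪ segment ℝ v v' := by
  rw [segment_eq_image'] at h ⊢
  rcases le_or_gt 0 u with h0 | h0
  · exact .inr ⟨u, ⟨h0, hu⟩, rfl⟩
  · left
    obtain ⟨_, ⟨t, ht, rfl⟩, hdist⟩ := mem_thickening_iff.1 h
    rw [dist_eq_norm, add_sub_add_left_eq_sub, ← sub_smul, norm_smul] at hdist
    rw [mem_ball_iff_norm, add_sub_cancel_left, norm_smul]
    refine lt_of_le_of_lt ?_ hdist
    gcongr
    rw [Real.norm_of_nonpos h0.le, Real.norm_of_nonpos (by linarith [ht.1])]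
    linarith [ht.1]

lemma exists_holePush_image_subset {A : Set ℂ} (hAcl : IsClosed A) {v v' : ℂ} (hv : v ≠ v')
    (hA : A ∩ segment ℝ v v' ⊆ {v}) (hstraight : StraightAt A v v') {ρ : ℝ} (hρ : 0 < ρ) :
    ∃ w, HolePush v v' w ∧ w '' A ⊆ A ∪ ball v ρ ∪ segment ℝ v v' := by
  obtain ⟨r, hr, hstraight⟩ := hstraight
  let U : Set ℂ := thickening ρ (segment ℝ v v') ∩ (A \ ball v r)ᶜ
  have hUopen : IsOpen U := isOpen_thickening.inter (hAcl.sdiff isOpen_ball).isOpen_compl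
  have hUseg : segment ℝ v v' ⊆ U := fun z hz ↦ ⟨self_subset_thickening hρ _ hz,
    fun ⟨hzA, hzr⟩ ↦ hzr (by rw [hA ⟨hzA, hz⟩]; exact mem_ball_self hr)⟩
  obtain ⟨w, hwU, hw⟩ := exists_holePush_segment hUopen hUseg
  obtain ⟨R, hR⟩ := ((isCompact_segment v v').isBounded.thickening (δ := ρ)).exists_norm_le
  have hfar (z : ℂ) (hz : R + 1 ≤ ‖z‖) : w z = z :=
    hwU.1 z fun h ↦ by linarith [hR z h.1]
  obtain ⟨φ, hφ, hwφ⟩ := exists_strictMono_of_displacement_along (v := v)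
    (sub_ne_zero.2 hv.symm) hwU.2 hfar
  have hφ0 : φ 0 = 1 := by
    have := hwφ 0
    beta_reduce at this
    rw [zero_smul, add_zero, hw.apply_eq, ← sub_eq_iff_eq_add'] at this
    refine smul_left_injective ℝ (sub_ne_zero.2 hv.symm) ?_
    beta_reduce
    rw [one_smul, ← this]
  refine ⟨w, hw, ?_⟩
  rintro _ ⟨a, ha, rfl⟩
  by_cases haU : a ∈ U
  · have har : ‖a - v‖ ≤ r := by
      by_contra! h
      exact haU.2 ⟨ha, fun h' ↦ by linarith [mem_ball_iff_norm.1 h']⟩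
    obtain ⟨s, hs, rfl⟩ := hstraight a ha har
    have hwaU : w (v - s • (v' - v)) ∈ U := by
      by_contra h
      exact h (by rwa [w.injective (hwU.1 _ h)])
    rw [sub_eq_add_neg, ← neg_smul, hwφ] at hwaU ⊢
    rw [union_assoc]
    exact .inr (mem_segment_or_mem_ball_of_mem_thickening
      ((hφ.monotone (neg_nonpos.2 hs)).trans_eq hφ0) hwaU.1)
  · exact .inl (.inl (by rwa [hwU.1 a haU]))

lemma HolePush.exists_next {p : ℝ} {v v' : ℂ} {W : ℂ ≃ₜ ℂ} (hW : HolePush p v W)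
    (hv : v ≠ v') (hA : W '' leftRay p ∩ segment ℝ v v' ⊆ {v}) {ρ : ℝ} (hρ : 0 < ρ) :
    ∃ W', HolePush p v' W' ∧
      W' '' leftRay p ⊆ W '' leftRay p ∪ ball v ρ ∪ segment ℝ v v' := by
  obtain ⟨W₁, hW₁, hsub, hA₁, hstraight⟩ := hW.exists_straightAt hv hA hρ
  obtain ⟨w, hw, hwsub⟩ := exists_holePush_image_subset
    (W₁.isClosedMap _ (isClosed_leftRay p)) hv hA₁ hstraight hρ
  refine ⟨w * W₁, hW₁.trans hw, ?_⟩
  rw [image_mul_homeomorph]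
  refine hwsub.trans (union_subset_union_left _ (union_subset hsub subset_union_right))

lemma SimplePolyline.exists_holePush {p : ℝ} {v e : ℂ} {T B : Set ℂ} (hT : SimplePolyline v e T)
    (hB : IsClosed B) {W : ℂ ≃ₜ ℂ} (hW : HolePush p v W) (hTB : T ∩ B ⊆ {e})
    (hAT : W '' leftRay p ∩ T ⊆ {v}) (hAB : W '' leftRay p ∩ B ⊆ {e}) :
    ∃ W', HolePush p e W' ∧ W' '' leftRay p ∩ B ⊆ {e} := by
  induction hT generalizing W with
  | point => exact ⟨W, hW, hAB⟩
  | @cons v v' e T hT hv hvT ih =>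
    have hvT' : v ∉ T := fun h ↦ hv (hvT ⟨left_mem_segment ℝ v v', h⟩)
    have hvB : v ∉ B := fun h ↦
      hvT' (by rw [hTB ⟨.inl (left_mem_segment ℝ v v'), h⟩]; exact hT.right_mem)
    obtain ⟨ρ, hρ, hball⟩ := Metric.isOpen_iff.1
      (hT.isCompact.isClosed.union hB).isOpen_compl v (by simp [hvT', hvB])
    obtain ⟨W', hW', hsub⟩ := hW.exists_next hv
      ((inter_subset_inter_right _ subset_union_left).trans hAT) hρ
    refine ih hW' ((inter_subset_inter_left _ subset_union_right).trans hTB) ?_ ?_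
    · rintro z ⟨hz, hzT⟩
      rcases hsub hz with (hz | hz) | hz
      · exact absurd (hAT ⟨hz, .inr hzT⟩ ▸ hzT) hvT'
      · exact absurd (.inl hzT) (hball hz)
      · exact hvT ⟨hz, hzT⟩
    · rintro z ⟨hz, hzB⟩
      rcases hsub hz with (hz | hz) | hz
      · exact hAB ⟨hz, hzB⟩
      · exact absurd (.inr hzB) (hball hz)
      · exact hTB ⟨.inl hz, hzB⟩

end RayPush

section RayAvoidance

lemma exists_inv_recenter_eq {P : ℝ} (hP : 0 < P) {s : ℝ} (hs : 0 < s) :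
    ∃ y : ℝ, y < -P ∧ (recenter ((-P : ℝ) : ℂ))⁻¹ (-s : ℝ) = y := by
  let φ (y : ℝ) : ℝ := y + plateau (0 : ℂ) (1 + P) y * P
  have hφ (y : ℝ) : recenter ((-P : ℝ) : ℂ) y = φ y := by
    rw [recenter_apply, Complex.norm_real, norm_neg, Real.norm_of_nonneg hP.le, Complex.real_smul]
    simp only [φ]
    push_cast
    ring
  have hφcont : Continuous φ :=
    continuous_id.add ((continuous_plateau continuous_const continuous_const
      Complex.continuous_ofReal fun _ ↦ by positivity).mul_const P)
  have hnorm {x : ℝ} (hx : 0 ≤ x) : ‖((-x : ℝ) : ℂ) - 0‖ = x := by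
    rw [sub_zero, Complex.norm_real, norm_neg, Real.norm_of_nonneg hx]
  have hφP : φ (-P) = 0 := by
    simp only [φ]
    rw [plateau_eq_one (by positivity) (by rw [hnorm hP.le]; linarith)]
    ring
  have hφfar : φ (-(s + 3 * (1 + P))) = -(s + 3 * (1 + P)) := by
    simp only [φ]
    rw [plateau_eq_zero (by positivity) (by rw [hnorm (by positivity)]; linarith)]
    ring
  obtain ⟨y, ⟨-, hyP⟩, hy⟩ := intermediate_value_Icc (by linarith) hφcont.continuousOn
    (show -s ∈ Icc (φ (-(s + 3 * (1 + P)))) (φ (-P)) by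
      rw [hφfar, hφP]; constructor <;> linarith)
  refine ⟨y, hyP.lt_of_ne ?_, ?_⟩
  · rintro rfl
    linarith
  · rw [← hy, ← hφ]
    exact (recenter _).symm_apply_apply _

lemma segment_ofReal_eq_image_Icc {a b : ℝ} (hab : a ≤ b) :
    segment ℝ (a : ℂ) b = Complex.ofReal '' Icc a b := by
  rw [← segment_eq_Icc hab]
  exact (image_segment ℝ Complex.ofRealLI.toLinearMap.toAffineMap a b).symm

lemma exists_simplePolyline_apply_zero {g : ℂ ≃ₜ ℂ} (h0 : ∀ᶠ z in 𝓝 0, g z = z) {Ω : Set ℂ}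
    (hΩ : IsOpen Ω) {P : ℝ} (hP : 0 < P) (hg : ∀ x ∈ Ioo (-P) 0, g (x : ℝ) ∈ Ω) {y : ℝ}
    (hy : y ∈ Ioo (-P) 0) : ∃ T ⊆ Ω ∪ {0}, SimplePolyline (g y) 0 T := by
  obtain ⟨ε, hε, hball⟩ := nhds_basis_closedBall.mem_iff.1 h0
  obtain ⟨δ, hδ, hδε, hδP⟩ : ∃ δ > 0, δ ≤ ε ∧ δ < P :=
    ⟨min ε (P / 2), by positivity, min_le_left _ _, by linarith [min_le_right ε (P / 2)]⟩
  have hfix (x : ℝ) (hx : x ∈ Icc (-δ) 0) : g x = x :=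
    hball (by
      rw [mem_closedBall_zero_iff, Complex.norm_real, Real.norm_of_nonpos hx.2]; linarith [hx.1])
  have hsegment : segment ℝ ((-δ : ℝ) : ℂ) (0 : ℝ) ∪ {((0 : ℝ) : ℂ)} ⊆ Ω ∪ {0} := by
    refine union_subset ?_ subset_union_right
    rw [segment_ofReal_eq_image_Icc (by linarith)]
    rintro _ ⟨x, hx, rfl⟩
    rcases hx.2.eq_or_lt with rfl | hx0
    · exact .inr Complex.ofReal_zero
    · exact .inl (by rw [← hfix x hx]; exact hg x ⟨by linarith [hx.1], hx0⟩)
  have hstart : SimplePolyline (g (-δ : ℝ)) 0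
      (segment ℝ ((-δ : ℝ) : ℂ) (0 : ℝ) ∪ {((0 : ℝ) : ℂ)}) := by
    rw [hfix (-δ) ⟨le_rfl, by linarith⟩, Complex.ofReal_zero]
    exact .cons (.point 0) (by simpa using hδ.ne') inter_subset_right
  refine SimplePolyline.exists_of_isPreconnected
    (Γ := (fun x : ℝ ↦ g x) '' Ioo (-P) 0) (isPreconnected_Ioo.image _ (by fun_prop)) ?_
    (mem_image_of_mem _ ⟨by linarith, by linarith⟩) (mem_image_of_mem _ hy) hsegment hstart
  rintro _ ⟨x, hx, rfl⟩
  exact interior_maximal subset_union_left hΩ (hg x hx)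

lemma apply_ofReal_notMem_image_nonneg (g : ℂ ≃ₜ ℂ) {x : ℝ} (hx : x < 0) :
    g x ∉ g '' (Complex.ofReal '' Ici 0) := by
  rw [g.injective.mem_set_image, Complex.ofReal_injective.mem_set_image]
  exact hx.not_ge

lemma lt_re_apply_of_lt_re {g : ℂ ≃ₜ ℂ} {R : ℝ} (hR : ∀ z, R ≤ ‖z‖ → g z = z) {c : ℝ}
    (hc : c ≤ -R) {z : ℂ} (hz : c < z.re) : c < (g z).re := by
  rcases le_or_gt R ‖g z‖ with h | h
  · rwa [g.injective (hR _ h)]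
  · linarith [neg_abs_le (g z).re, Complex.abs_re_le_norm (g z)]

lemma exists_simplePolyline_disjoint_rays {g : ℂ ≃ₜ ℂ} (h0 : ∀ᶠ z in 𝓝 0, g z = z) {R : ℝ}
    (hR0 : 0 < R) (hR : ∀ z, R ≤ ‖z‖ → g z = z) :
    ∃ T, SimplePolyline ((-(R + 1) : ℝ) : ℂ) 0 T ∧ T ∩ g '' (Complex.ofReal '' Ici 0) ⊆ {0} ∧
      leftRay (-(R + 1)) ∩ T ⊆ {((-(R + 1) : ℝ) : ℂ)} := by
  let Ω : Set ℂ := (g '' (Complex.ofReal '' Ici 0))ᶜ ∩ {z | -(R + 1) < z.re}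
  have hΩ : IsOpen Ω :=
    (g.isClosedMap _ (Complex.isUniformEmbedding_ofReal.isClosedEmbedding.isClosedMap _
      isClosed_Ici)).isOpen_compl.inter (isOpen_lt continuous_const Complex.continuous_re)
  have hfar {x : ℝ} (hx : x ≤ -R) : g x = x :=
    hR x (by rw [Complex.norm_real, Real.norm_of_nonpos (by linarith)]; linarith)
  have hgΩ : ∀ x ∈ Ioo (-(R + 1)) 0, g (x : ℝ) ∈ Ω := fun x hx ↦
    ⟨apply_ofReal_notMem_image_nonneg g hx.2, lt_re_apply_of_lt_re hR (by linarith) hx.1⟩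
  obtain ⟨T, hTS, hT⟩ := exists_simplePolyline_apply_zero h0 hΩ (by linarith) hgΩ
    (y := -R) ⟨by linarith, by linarith⟩
  rw [hfar le_rfl] at hT
  obtain ⟨T', hT'sub, hT'⟩ := hT.exists_cons ((-(R + 1) : ℝ) : ℂ)
  have hT'Ω : ∀ z ∈ T', z = (-(R + 1) : ℝ) ∨ z ∈ Ω ∨ z = 0 := by
    intro z hz
    rcases hT'sub hz with hz | hz
    · rw [segment_ofReal_eq_image_Icc (by linarith)] at hz
      obtain ⟨x, hx, rfl⟩ := hz
      rcases hx.1.eq_or_lt with rfl | hx1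
      · exact .inl rfl
      · exact .inr (.inl (by rw [← hfar hx.2]; exact hgΩ x ⟨hx1, by linarith [hx.2]⟩))
    · exact .inr (hTS hz)
  refine ⟨T', hT', ?_, ?_⟩
  · rintro z ⟨hz, hzb⟩
    rcases hT'Ω z hz with rfl | hzΩ | hz0
    · rw [← hfar (by linarith : -(R + 1) ≤ -R)] at hzb
      exact absurd hzb (apply_ofReal_notMem_image_nonneg g (by linarith))
    · exact absurd hzb hzΩ.1
    · exact hz0
  · rintro _ ⟨⟨x, hx, rfl⟩, hz⟩
    rcases hT'Ω _ hz with hz | hz | hz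
    · exact hz
    · exact absurd (show -(R + 1) < x from hz.2) (not_lt.2 hx)
    · linarith [Complex.ofReal_eq_zero.1 hz, mem_Iic.1 hx]

lemma exists_mem_annularIsotopyGroup_apply_ne {g : ℂ ≃ₜ ℂ} (h0 : ∀ᶠ z in 𝓝 0, g z = z) {R : ℝ}
    (hR : ∀ z, R ≤ ‖z‖ → g z = z) :
    ∃ u ∈ annularIsotopyGroup, ∀ s t : ℝ, 0 < s → 0 < t → u (-s : ℝ) ≠ g t := by
  wlog hR0 : 0 < R generalizing R
  · exact this (R := 1) (fun z hz ↦ hR z (by linarith)) one_pos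
  obtain ⟨T, hT, hTb, hTray⟩ := exists_simplePolyline_disjoint_rays h0 hR0 hR
  have hrays : leftRay (-(R + 1)) ∩ g '' (Complex.ofReal '' Ici 0) ⊆ {0} := by
    rintro _ ⟨⟨x, hx, rfl⟩, _, ⟨t, ht, rfl⟩, hxt⟩
    have hx' := mem_Iic.1 hx
    have hgx : g x = x :=
      hR x (by rw [Complex.norm_real, Real.norm_of_nonpos (by linarith)]; linarith)
    linarith [Complex.ofReal_injective (g.injective (hxt.trans hgx.symm)), mem_Ici.1 ht]
  have hone (s : Set ℂ) : (1 : ℂ ≃ₜ ℂ) '' s = s := image_id s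
  obtain ⟨W, hW, hWb⟩ := hT.exists_holePush
    (g.isClosedMap _ (Complex.isUniformEmbedding_ofReal.isClosedEmbedding.isClosedMap _
      isClosed_Ici)) (HolePush.refl _) hTb (by rwa [hone]) (by rwa [hone])
  refine ⟨W * (recenter ((-(R + 1) : ℝ) : ℂ))⁻¹, ?_, fun s t hs ht heq ↦ ?_⟩
  · simpa only [HolePush, recenter_zero, one_mul] using hW
  obtain ⟨y, hy, hys⟩ := exists_inv_recenter_eq (by linarith : 0 < R + 1) hs
  rw [Homeomorph.mul_apply, hys] at heq
  have hWy : W y = 0 := hWb ⟨mem_image_of_mem _ (mem_image_of_mem _ hy.le), _,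
    mem_image_of_mem _ ht.le, heq.symm⟩
  exact hy.ne (Complex.ofReal_injective (W.injective (hWy.trans hW.apply_eq.symm)))

end RayAvoidance

section Squeeze

variable {E : Type*} [NormedAddCommGroup E] [NormedSpace ℝ E] {r R C : ℝ}

/-- The radial homeomorphism of `E` onto the open ball of radius `R` that fixes the ball of radius
`r` pointwise; its inverse is `inflate r R`. -/
noncomputable def deflate (r R : ℝ) (u : E) : E := (R / (R - r + max ‖u‖ r)) • u

/-- The radial homeomorphism of the open ball of radius `R` onto `E` that fixes the ball of radius
`r` pointwise; its inverse is `deflate r R`. -/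
noncomputable def inflate (r R : ℝ) (w : E) : E := ((R - r) / (R - max ‖w‖ r)) • w

lemma deflate_of_norm_le (hr : 0 < r) (hrR : r < R) {u : E} (hu : ‖u‖ ≤ r) :
    deflate r R u = u := by
  rw [deflate, max_eq_right hu, sub_add_cancel, div_self (by linarith), one_smul]

lemma inflate_of_norm_le (hrR : r < R) {w : E} (hw : ‖w‖ ≤ r) : inflate r R w = w := by
  rw [inflate, max_eq_right hw, div_self (by linarith), one_smul]

lemma max_norm_deflate (hr : 0 < r) (hrR : r < R) (u : E) :
    max ‖deflate r R u‖ r = R / (R - r + max ‖u‖ r) * max ‖u‖ r := by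
  rcases le_or_gt ‖u‖ r with hu | hu
  · rw [deflate_of_norm_le hr hrR hu, max_eq_right hu, sub_add_cancel, div_self (by linarith),
      one_mul]
  · have hpos : 0 < R - r + ‖u‖ := by linarith
    rw [deflate, max_eq_left hu.le, norm_smul,
      Real.norm_of_nonneg (div_nonneg (by linarith) hpos.le), max_eq_left]
    rw [div_mul_eq_mul_div, le_div_iff₀ hpos]
    nlinarith

lemma max_norm_inflate (hr : 0 < r) (hrR : r < R) {w : E} (hw : ‖w‖ < R) :
    max ‖inflate r R w‖ r = (R - r) / (R - max ‖w‖ r) * max ‖w‖ r := by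
  rcases le_or_gt ‖w‖ r with hwr | hwr
  · rw [inflate_of_norm_le hrR hwr, max_eq_right hwr, div_self (by linarith), one_mul]
  · have hpos : 0 < R - ‖w‖ := by linarith
    rw [inflate, max_eq_left hwr.le, norm_smul,
      Real.norm_of_nonneg (div_nonneg (by linarith) hpos.le), max_eq_left]
    rw [div_mul_eq_mul_div, le_div_iff₀ hpos]
    nlinarith

lemma norm_deflate_lt (hr : 0 < r) (hrR : r < R) (u : E) : ‖deflate r R u‖ < R := by
  have hpos : 0 < R - r + max ‖u‖ r := by linarith [le_max_right ‖u‖ r]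
  refine (le_max_left _ r).trans_lt ?_
  rw [max_norm_deflate hr hrR, div_mul_eq_mul_div, div_lt_iff₀ hpos]
  nlinarith

lemma inflate_deflate (hr : 0 < r) (hrR : r < R) (u : E) : inflate r R (deflate r R u) = u := by
  have hpos : R - r + max ‖u‖ r ≠ 0 := by linarith [le_max_right ‖u‖ r]
  have hRr : R - r ≠ 0 := by linarith
  have hR : R ≠ 0 := by linarith
  rw [inflate, max_norm_deflate hr hrR, deflate, smul_smul]
  convert one_smul ℝ u using 2
  have hden : R - R / (R - r + max ‖u‖ r) * max ‖u‖ r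
      = (R - r) * (R / (R - r + max ‖u‖ r)) := by
    field_simp
    ring
  rw [hden, div_mul_eq_mul_div, div_self (mul_ne_zero hRr (div_ne_zero hR hpos))]

lemma sub_add_max_norm_inflate (hr : 0 < r) (hrR : r < R) {w : E} (hw : ‖w‖ < R) :
    R - r + max ‖inflate r R w‖ r = R * ((R - r) / (R - max ‖w‖ r)) := by
  have hpos : R - max ‖w‖ r ≠ 0 := (sub_pos.2 (max_lt hw hrR)).ne'
  rw [max_norm_inflate hr hrR hw]
  field_simp
  ring

lemma deflate_inflate (hr : 0 < r) (hrR : r < R) {w : E} (hw : ‖w‖ < R) :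
    deflate r R (inflate r R w) = w := by
  have hpos : R - max ‖w‖ r ≠ 0 := (sub_pos.2 (max_lt hw hrR)).ne'
  have hRr : R - r ≠ 0 := by linarith
  rw [deflate, sub_add_max_norm_inflate hr hrR hw, inflate, smul_smul, div_mul_eq_mul_div,
    div_self (mul_ne_zero (by linarith) (div_ne_zero hRr hpos)), one_smul]

lemma continuous_deflate (hr : 0 < r) (hrR : r < R) : Continuous (deflate r R : E → E) := by
  have (u : E) : R - r + max ‖u‖ r ≠ 0 := by linarith [le_max_right ‖u‖ r]
  unfold deflate
  fun_prop (disch := assumption)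

lemma continuousOn_inflate (hrR : r < R) : ContinuousOn (inflate r R : E → E) (ball 0 R) := by
  have : ∀ w ∈ ball (0 : E) R, R - max ‖w‖ r ≠ 0 := fun w hw ↦
    (sub_pos.2 (max_lt (mem_ball_zero_iff.1 hw) hrR)).ne'
  unfold inflate
  fun_prop (disch := assumption)

lemma norm_deflate_sub_le (hr : 0 < r) (hrR : r < R) (u u' : E) :
    ‖deflate r R u - deflate r R u'‖ ≤ 2 * (R / (R - r + max ‖u'‖ r)) * ‖u - u'‖ := by
  set a := R - r + max ‖u‖ r with ha
  set a' := R - r + max ‖u'‖ r with ha'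
  have hapos : 0 < a := by linarith [le_max_right ‖u‖ r]
  have hapos' : 0 < a' := by linarith [le_max_right ‖u'‖ r]
  have hua : ‖u‖ / a ≤ 1 := (div_le_one hapos).2 (by linarith [le_max_left ‖u‖ r])
  have hsub : |a' - a| ≤ ‖u - u'‖ := by
    rw [ha, ha', add_sub_add_left_eq_sub, norm_sub_rev]
    exact (abs_max_sub_max_le_abs _ _ _).trans (abs_norm_sub_norm_le _ _)
  have hdecomp : deflate r R u - deflate r R u'
      = (R / a') • (u - u') + ((R / a') * ((a' - a) / a)) • u := by
    have : R / a = R / a' + R / a' * ((a' - a) / a) := by field_simp; ring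
    rw [deflate, deflate, ← ha, ← ha', this]
    module
  have hcoef : 0 ≤ R / a' := div_nonneg (by linarith) hapos'.le
  calc ‖deflate r R u - deflate r R u'‖
      ≤ R / a' * ‖u - u'‖ + R / a' * (|a' - a| / a) * ‖u‖ := by
        rw [hdecomp]
        refine (norm_add_le _ _).trans_eq ?_
        rw [norm_smul, norm_smul, norm_mul, Real.norm_of_nonneg hcoef, norm_div,
          Real.norm_of_nonneg hapos.le, Real.norm_eq_abs]
    _ = R / a' * (‖u - u'‖ + |a' - a| * (‖u‖ / a)) := by ring
    _ ≤ R / a' * (‖u - u'‖ + ‖u - u'‖ * 1) := by gcongr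
    _ = 2 * (R / a') * ‖u - u'‖ := by ring

open Classical in
/-- The conjugate of `g` by `deflate r R` on the open ball of radius `R`, extended by the identity;
where neither `z` nor `g z` leaves the ball of radius `r` it agrees with `g`. -/
noncomputable def squeeze (r R : ℝ) (g : E → E) (w : E) : E :=
  if ‖w‖ < R then deflate r R (g (inflate r R w)) else w

variable {g : E → E}

lemma squeeze_of_lt {w : E} (hw : ‖w‖ < R) : squeeze r R g w = deflate r R (g (inflate r R w)) :=
  if_pos hw

lemma squeeze_of_le {w : E} (hw : R ≤ ‖w‖) : squeeze r R g w = w := if_neg hw.not_gt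

lemma squeeze_eq (hr : 0 < r) (hrR : r < R) {w : E} (hw : ‖w‖ ≤ r) (hgw : ‖g w‖ ≤ r) :
    squeeze r R g w = g w := by
  rw [squeeze_of_lt (hw.trans_lt hrR), inflate_of_norm_le hrR hw, deflate_of_norm_le hr hrR hgw]

lemma squeeze_eq_self (hr : 0 < r) (hrR : r < R) {w : E} (hg : ∀ s : ℝ, 1 ≤ s → g (s • w) = s • w) :
    squeeze r R g w = w := by
  rcases lt_or_ge ‖w‖ R with hw | hw
  · have hpos : 0 < R - max ‖w‖ r := sub_pos.2 (max_lt hw hrR)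
    have hfix : g (inflate r R w) = inflate r R w :=
      hg _ ((one_le_div hpos).2 (by linarith [le_max_right ‖w‖ r]))
    rw [squeeze_of_lt hw, hfix, deflate_inflate hr hrR hw]
  · exact squeeze_of_le hw

lemma squeeze_squeeze (hr : 0 < r) (hrR : r < R) {g' : E → E} (h : Function.LeftInverse g' g)
    (w : E) : squeeze r R g' (squeeze r R g w) = w := by
  rcases lt_or_ge ‖w‖ R with hw | hw
  · rw [squeeze_of_lt hw, squeeze_of_lt (norm_deflate_lt hr hrR _), inflate_deflate hr hrR, h,
      deflate_inflate hr hrR hw]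
  · rw [squeeze_of_le hw, squeeze_of_le hw]

lemma norm_squeeze_sub_le (hr : 0 < r) (hrR : r < R) (hC : ∀ z, ‖g z - z‖ ≤ C) (w : E) :
    ‖squeeze r R g w - w‖ ≤ 2 * max 0 ((R - max ‖w‖ r) / (R - r)) * C := by
  rcases lt_or_ge ‖w‖ R with hw | hw
  · have hpos : 0 < R - max ‖w‖ r := sub_pos.2 (max_lt hw hrR)
    have hfactor : R / (R - r + max ‖inflate r R w‖ r) = (R - max ‖w‖ r) / (R - r) := by
      have hRr : R - r ≠ 0 := by linarith
      have hR : R ≠ 0 := by linarith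
      rw [sub_add_max_norm_inflate hr hrR hw]
      field_simp
    have hle := norm_deflate_sub_le hr hrR (g (inflate r R w)) (inflate r R w)
    rw [deflate_inflate hr hrR hw, hfactor, ← squeeze_of_lt hw] at hle
    rw [max_eq_right (div_nonneg hpos.le (by linarith))]
    refine hle.trans ?_
    have := hC (inflate r R w)
    have := sub_pos.2 hrR
    gcongr
  · have hC0 : 0 ≤ C := (norm_nonneg _).trans (hC 0)
    rw [squeeze_of_le hw, sub_self, norm_zero]
    positivity

lemma continuous_squeeze (hr : 0 < r) (hrR : r < R) (hg : Continuous g)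
    (hC : ∀ z, ‖g z - z‖ ≤ C) : Continuous (squeeze r R g) := by
  refine continuous_iff_continuousAt.2 fun w ↦ ?_
  rcases lt_or_ge ‖w‖ R with hw | hw
  · have hball : ball (0 : E) R ∈ 𝓝 w := isOpen_ball.mem_nhds (mem_ball_zero_iff.2 hw)
    have hconj : ContinuousAt (fun w ↦ deflate r R (g (inflate r R w))) w :=
      ((continuous_deflate hr hrR).comp hg).continuousAt.comp
        ((continuousOn_inflate hrR).continuousAt hball)
    exact hconj.congr (eventuallyEq_of_mem hball fun x hx ↦
      (squeeze_of_lt (mem_ball_zero_iff.1 hx)).symm)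
  · have hbound : Continuous fun w : E ↦ 2 * max 0 ((R - max ‖w‖ r) / (R - r)) * C := by fun_prop
    have hzero : 2 * max 0 ((R - max ‖w‖ r) / (R - r)) * C = 0 := by
      rw [max_eq_left (div_nonpos_of_nonpos_of_nonneg
        (by linarith [le_max_left ‖w‖ r]) (by linarith))]
      ring
    have hdiff : Tendsto (fun x ↦ squeeze r R g x - x) (𝓝 w) (𝓝 0) :=
      squeeze_zero_norm (norm_squeeze_sub_le hr hrR hC)
        (by simpa only [hzero] using hbound.tendsto w)
    rw [ContinuousAt, squeeze_of_le hw]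
    simpa only [sub_add_cancel, zero_add, id_eq] using hdiff.add (continuousAt_id (x := w))

lemma exists_homeomorph_eq_squeeze (hr : 0 < r) (hrR : r < R) {g : E ≃ₜ E}
    (hC : ∀ z, ‖g z - z‖ ≤ C) : ∃ f : E ≃ₜ E, ∀ z, f z = squeeze r R g z := by
  have hC' (z : E) : ‖g.symm z - z‖ ≤ C := by
    rw [norm_sub_rev]
    simpa only [g.apply_symm_apply] using hC (g.symm z)
  exact ⟨{  toFun := squeeze r R g
            invFun := squeeze r R g.symm
            left_inv := squeeze_squeeze hr hrR g.symm_apply_apply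
            right_inv := squeeze_squeeze hr hrR g.apply_symm_apply
            continuous_toFun := continuous_squeeze hr hrR g.continuous hC
            continuous_invFun := continuous_squeeze hr hrR g.symm.continuous hC' }, fun _ ↦ rfl⟩

end Squeeze

section Transport

variable {X Y : Type*} [TopologicalSpace X] [TopologicalSpace Y]

lemma mem_of_apply_mem_of_eq_self {f : X ≃ₜ X} {K : Set X} (hf : ∀ x ∉ K, f x = x) {x : X}
    (hx : x ∈ K) : f x ∈ K := by
  by_contra h
  exact h (by rwa [f.injective (hf _ h)])

open Classical in
/-- The self-map of `Y` that is `f` read through the chart `e` on `e.target`, and is the identity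
elsewhere. -/
noncomputable def transport (e : OpenPartialHomeomorph X Y) (f : X → X) (y : Y) : Y :=
  if y ∈ e.target then e (f (e.symm y)) else y

variable {e : OpenPartialHomeomorph X Y} {K : Set X}

lemma transport_of_notMem {f : X → X} (hf : ∀ x ∉ K, f x = x) {y : Y} (hy : y ∉ e '' K) :
    transport e f y = y := by
  unfold transport
  split_ifs with h
  · have : e.symm y ∉ K := fun hK ↦ hy ⟨_, hK, e.right_inv h⟩
    rw [hf _ this, e.right_inv h]
  · rfl

lemma transport_apply {f : X → X} {x : X} (hx : x ∈ e.source) :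
    transport e f (e x) = e (f x) := by
  rw [transport, if_pos (e.map_source hx), e.left_inv hx]

lemma continuous_transport [T2Space Y] (hK : IsCompact K) (hKe : K ⊆ e.source) {f : X ≃ₜ X}
    (hf : ∀ x ∉ K, f x = x) : Continuous (transport e f) := by
  have himage : IsClosed (e '' K) := (hK.image_of_continuousOn (e.continuousOn.mono hKe)).isClosed
  refine continuous_iff_continuousAt.2 fun y ↦ ?_
  by_cases hy : y ∈ e.target
  · have hfy : f (e.symm y) ∈ e.source := by
      by_cases hyK : e.symm y ∈ K
      · exact hKe (mem_of_apply_mem_of_eq_self hf hyK)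
      · rw [hf _ hyK]
        exact e.map_target hy
    have hconj : ContinuousAt (fun y ↦ e (f (e.symm y))) y :=
      ContinuousAt.comp (g := e) (e.continuousAt hfy)
        (f.continuous.continuousAt.comp (f := e.symm) (e.continuousAt_symm hy))
    exact hconj.congr (eventuallyEq_of_mem (e.open_target.mem_nhds hy) fun z hz ↦
      (if_pos hz).symm)
  · have hyK : y ∉ e '' K := by
      rintro ⟨x, hx, rfl⟩
      exact hy (e.map_source (hKe hx))
    exact continuousAt_id.congr (eventuallyEq_of_mem (himage.isOpen_compl.mem_nhds hyK) fun z hz ↦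
      (transport_of_notMem hf hz).symm)

lemma transport_transport (hKe : K ⊆ e.source) {f g : X → X} (hf : ∀ x ∉ K, f x = x)
    (hfK : ∀ x ∈ K, f x ∈ K) (hg : ∀ x ∉ K, g x = x) (hgf : Function.LeftInverse g f) (y : Y) :
    transport e g (transport e f y) = y := by
  by_cases hy : y ∈ e '' K
  · obtain ⟨x, hx, rfl⟩ := hy
    rw [transport_apply (hKe hx), transport_apply (hKe (hfK x hx)), hgf]
  · rw [transport_of_notMem hf hy, transport_of_notMem hg hy]

lemma exists_homeomorph_eq_transport [T2Space Y] (hK : IsCompact K) (hKe : K ⊆ e.source)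
    {f : X ≃ₜ X} (hf : ∀ x ∉ K, f x = x) : ∃ f' : Y ≃ₜ Y, ∀ y, f' y = transport e f y := by
  have hf' : ∀ x ∉ K, f.symm x = x := fun x hx ↦ (f.symm_apply_eq).2 (hf x hx).symm
  exact ⟨{  toFun := transport e f
            invFun := transport e f.symm
            left_inv := transport_transport hKe hf (fun _ ↦ mem_of_apply_mem_of_eq_self hf) hf'
              f.symm_apply_apply
            right_inv := transport_transport hKe hf' (fun _ ↦ mem_of_apply_mem_of_eq_self hf') hf
              f.apply_symm_apply
            continuous_toFun := continuous_transport hK hKe hf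
            continuous_invFun := continuous_transport hK hKe hf' }, fun _ ↦ rfl⟩

end Transport

section Strip

/-- The real-linear automorphism `x + iy ↦ a * x + iy` of the plane. -/
noncomputable def scaleRe (a : ℝ) (ha : a ≠ 0) : ℂ ≃L[ℝ] ℂ :=
  (Complex.equivRealProdCLM.trans
    ((ContinuousLinearEquiv.smulLeft (Units.mk0 a ha)).prodCongr (.refl ℝ ℝ))).trans
      Complex.equivRealProdCLM.symm

lemma norm_scaleRe_le {a : ℝ} (ha : 0 < a) (z : ℂ) :
    ‖scaleRe a ha.ne' z‖ ≤ a * |z.re| + |z.im| := by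
  refine (Complex.norm_le_abs_re_add_abs_im _).trans_eq ?_
  change |a * z.re| + |z.im| = _
  rw [abs_mul, abs_of_pos ha]

lemma im_scaleRe {a : ℝ} (ha : a ≠ 0) (z : ℂ) : (scaleRe a ha z).im = z.im := rfl

lemma exists_squeeze_in_strip {L : ℂ ≃ₜ ℂ} {C M a r R : ℝ} (hC : ∀ z, ‖L z - z‖ ≤ C)
    (hM : ∀ z, M ≤ |z.re| → L z = z) (ha : 0 < a) (hr : 0 < r) (hrR : r < R) :
    ∃ T : ℂ ≃ₜ ℂ, ∃ K, IsCompact K ∧ (∀ z ∈ K, |z.im| ≤ R) ∧ (∀ z ∉ K, T z = z) ∧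
      (∀ z, ‖scaleRe a ha.ne' z‖ ≤ r → ‖scaleRe a ha.ne' (L z)‖ ≤ r → T z = L z) ∧
      ∀ z, M ≤ |z.re| → T z = z := by
  let D : ℂ ≃L[ℝ] ℂ := scaleRe a ha.ne'
  let g : ℂ ≃ₜ ℂ := (D.symm.toHomeomorph.trans L).trans D.toHomeomorph
  have hg (z : ℂ) : g (D z) = D (L z) := congrArg (fun w ↦ D (L w)) (D.symm_apply_apply z)
  have hdisp (z : ℂ) : ‖g z - z‖ ≤ ‖(D : ℂ →L[ℝ] ℂ)‖ * C := by
    obtain ⟨w, rfl⟩ := D.surjective z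
    rw [hg, ← map_sub]
    exact ((D : ℂ →L[ℝ] ℂ).le_opNorm _).trans (by gcongr; exact hC w)
  obtain ⟨f, hf⟩ := exists_homeomorph_eq_squeeze hr hrR hdisp
  have hf' (z : ℂ) {w : ℂ} (h : f (D z) = D w) :
      ((D.toHomeomorph.trans f).trans D.symm.toHomeomorph) z = w :=
    (congrArg D.symm h).trans (D.symm_apply_apply w)
  refine ⟨(D.toHomeomorph.trans f).trans D.symm.toHomeomorph, D ⁻¹' closedBall 0 R,
    D.toHomeomorph.isCompact_preimage.2 (isCompact_closedBall 0 R), fun z hz ↦ ?_,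
    fun z hz ↦ hf' z ?_, fun z hz hLz ↦ hf' z ?_, fun z hz ↦ hf' z ?_⟩
  · rw [← im_scaleRe ha.ne' z]
    exact (Complex.abs_im_le_norm _).trans (mem_closedBall_zero_iff.1 hz)
  · rw [mem_preimage, mem_closedBall_zero_iff, not_le] at hz
    rw [hf, squeeze_of_le hz.le]
  · rw [hf, squeeze_eq hr hrR hz (by rwa [hg]), hg]
  · refine (hf _).trans (squeeze_eq_self hr hrR fun s hs ↦ ?_)
    rw [← map_smul, hg, hM]
    rw [Complex.smul_re, smul_eq_mul, abs_mul, abs_of_nonneg (by linarith)]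
    nlinarith [abs_nonneg z.re]

lemma exists_lt_forall_le_of_isCompact {X : Type*} [TopologicalSpace X] {K : Set X}
    (hK : IsCompact K) {f : X → ℝ} (hf : Continuous f) {b : ℝ} (hb : ∀ x, f x < b) :
    ∃ β < b, ∀ x ∈ K, f x ≤ β := by
  rcases K.eq_empty_or_nonempty with rfl | hne
  · exact ⟨b - 1, by linarith, fun x hx ↦ hx.elim⟩
  · obtain ⟨x, -, hx⟩ := hK.exists_isMaxOn hne hf.continuousOn
    exact ⟨f x, hb x, hx⟩

lemma exists_strip_homeomorph_eq_near_real {L : ℂ ≃ₜ ℂ} {C M : ℝ} (hC : ∀ z, ‖L z - z‖ ≤ C)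
    (hM : ∀ z, M ≤ |z.re| → L z = z) (him : ∀ x : ℝ, |(L x).im| < Real.pi) :
    ∃ T : ℂ ≃ₜ ℂ, ∃ K, IsCompact K ∧ (∀ z ∈ K, |z.im| < Real.pi) ∧ (∀ z ∉ K, T z = z) ∧
      ∀ x : ℝ, ∀ᶠ z in 𝓝 (x : ℂ), T z = L z := by
  have hC0 : 0 ≤ C := (norm_nonneg _).trans (hC 0)
  obtain ⟨β, hβ, hLβ⟩ : ∃ β < Real.pi, ∀ x ∈ Icc (-M) M, |(L (x : ℝ)).im| ≤ β :=
    exists_lt_forall_le_of_isCompact isCompact_Icc (by fun_prop) him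
  obtain ⟨r, hβr, hrπ⟩ := exists_between (max_lt hβ Real.pi_pos)
  obtain ⟨hβr, hr⟩ := max_lt_iff.1 hβr
  obtain ⟨R, hrR, hRπ⟩ := exists_between hrπ
  obtain ⟨a, ha, haM⟩ : ∃ a > 0, (M + C) * a < min r (r - β) :=
    exists_pos_mul_lt (lt_min hr (sub_pos.2 hβr)) _
  obtain ⟨T, K, hK, hKR, hTK, hTL, hTM⟩ := exists_squeeze_in_strip hC hM ha hr hrR
  refine ⟨T, K, hK, fun z hz ↦ (hKR z hz).trans_lt hRπ, hTK, fun x ↦ ?_⟩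
  rcases le_or_gt |x| M with hx | hx
  · have hnear : ‖scaleRe a ha.ne' x‖ < r ∧ ‖scaleRe a ha.ne' (L x)‖ < r := by
      have hre : |(L x).re| ≤ M + C := by
        have := (Complex.abs_re_le_norm _).trans (hC x)
        rw [Complex.sub_re, Complex.ofReal_re] at this
        linarith [abs_sub_abs_le_abs_sub (L x).re x]
      constructor
      · refine (norm_scaleRe_le ha _).trans_lt (lt_of_le_of_lt ?_ (lt_min_iff.1 haM).1)
        rw [Complex.ofReal_re, Complex.ofReal_im, abs_zero, add_zero, mul_comm]
        gcongr
        linarith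
      · refine (norm_scaleRe_le ha _).trans_lt ?_
        have := hLβ x (abs_le.1 hx)
        have := (lt_min_iff.1 haM).2
        nlinarith
    filter_upwards [(((scaleRe a ha.ne').continuous.norm.tendsto _).eventually_lt_const hnear.1),
      (((scaleRe a ha.ne').continuous.comp L.continuous).norm.tendsto _).eventually_lt_const
        hnear.2] with z hz hLz
    exact hTL z hz.le hLz.le
  · have hre : ∀ᶠ z : ℂ in 𝓝 (x : ℂ), M < |z.re| :=
      (Complex.continuous_re.abs.tendsto _).eventually_const_lt hx
    filter_upwards [hre] with z hz
    rw [hTM z hz.le, hM z hz.le]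

end Strip

section LogLift

lemma exists_continuous_log_lift {X : Type*} [TopologicalSpace X] [SimplyConnectedSpace X]
    [LocallyPathConnectedSpace X] {f : X → ℂ} (hf : Continuous f) (h0 : ∀ x, f x ≠ 0) {x₀ : X}
    {w : ℂ} (hw : Complex.exp w = f x₀) :
    ∃ F : X → ℂ, Continuous F ∧ F x₀ = w ∧ ∀ x, Complex.exp (F x) = f x := by
  obtain ⟨F, ⟨hFx₀, hF⟩, -⟩ :=
    Complex.isCoveringMapOn_exp.existsUnique_continuousMap_lifts ⟨f, hf⟩ hw h0
  exact ⟨F, F.continuous, hFx₀, congrFun hF⟩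

lemma eqOn_of_exp_eqOn {X : Type*} [TopologicalSpace X] {F G : X → ℂ} {s : Set X}
    (hs : IsPreconnected s) (hF : ContinuousOn F s) (hG : ContinuousOn G s)
    (hFG : ∀ x ∈ s, Complex.exp (F x) = Complex.exp (G x)) {x₀ : X} (hx₀ : x₀ ∈ s)
    (h₀ : F x₀ = G x₀) : EqOn F G s :=
  Complex.isCoveringMap_exp.eqOn_of_comp_eqOn hs hF hG (fun x hx ↦ Subtype.ext (hFG x hx)) hx₀ h₀

lemma eq_of_exp_eq {X : Type*} [TopologicalSpace X] [PreconnectedSpace X] {F G : X → ℂ}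
    (hF : Continuous F) (hG : Continuous G) (hFG : ∀ x, Complex.exp (F x) = Complex.exp (G x))
    (x₀ : X) (h₀ : F x₀ = G x₀) : F = G :=
  Complex.isCoveringMap_exp.eq_of_comp_eq hF hG (funext fun x ↦ Subtype.ext (hFG x)) x₀ h₀

variable {k : ℂ ≃ₜ ℂ} {M : ℝ}

lemma exists_log_lift (hk0 : k 0 = 0) (hkM : ∀ z, Real.exp M ≤ ‖z‖ → k z = z) :
    ∃ L : ℂ → ℂ, Continuous L ∧ (∀ z, Complex.exp (L z) = k (Complex.exp z)) ∧
      ∀ z, M ≤ z.re → L z = z := by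
  have hne (z : ℂ) : k (Complex.exp z) ≠ 0 := by
    rw [← hk0]
    exact k.injective.ne (Complex.exp_ne_zero z)
  have hfix (z : ℂ) (hz : M ≤ z.re) : k (Complex.exp z) = Complex.exp z :=
    hkM _ (by rw [Complex.norm_exp]; exact Real.exp_le_exp.2 hz)
  obtain ⟨L, hLcont, hLM, hL⟩ := exists_continuous_log_lift
    (k.continuous.comp Complex.continuous_exp) hne (hfix M (Complex.ofReal_re M).ge).symm
  exact ⟨L, hLcont, hL, eqOn_of_exp_eqOn (convex_halfSpace_re_ge M).isPreconnected
    hLcont.continuousOn continuousOn_id (fun z hz ↦ (hL z).trans (hfix z hz))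
    (Complex.ofReal_re M).ge hLM⟩

lemma exists_homeomorph_log_lift (hk0 : k 0 = 0) (hkM : ∀ z, Real.exp M ≤ ‖z‖ → k z = z) :
    ∃ L : ℂ ≃ₜ ℂ, (∀ z, Complex.exp (L z) = k (Complex.exp z)) ∧ ∀ z, M ≤ z.re → L z = z := by
  have hk0' : k.symm 0 = 0 := k.symm_apply_eq.2 hk0.symm
  have hkM' : ∀ z, Real.exp M ≤ ‖z‖ → k.symm z = z := fun z hz ↦
    k.symm_apply_eq.2 (hkM z hz).symm
  obtain ⟨L, hL, hLk, hLM⟩ := exists_log_lift hk0 hkM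
  obtain ⟨L', hL', hLk', hLM'⟩ := exists_log_lift hk0' hkM'
  have hM : M ≤ (M : ℂ).re := (Complex.ofReal_re M).ge
  refine ⟨⟨⟨L, L', congrFun (eq_of_exp_eq (hL'.comp hL) continuous_id (fun z ↦ ?_) M ?_),
    congrFun (eq_of_exp_eq (hL.comp hL') continuous_id (fun z ↦ ?_) M ?_)⟩, hL, hL'⟩, hLk, hLM⟩
  · exact (hLk' (L z)).trans (by rw [hLk, k.symm_apply_apply])
  · exact (congrArg L' (hLM M hM)).trans (hLM' M hM)
  · exact (hLk (L' z)).trans (by rw [hLk', k.apply_symm_apply])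
  · exact (congrArg L (hLM' M hM)).trans (hLM M hM)

variable {L : ℂ ≃ₜ ℂ}

lemma log_lift_add_two_pi_mul_I (hLk : ∀ z, Complex.exp (L z) = k (Complex.exp z))
    (hLM : ∀ z, M ≤ z.re → L z = z) (z : ℂ) :
    L (z + 2 * Real.pi * Complex.I) = L z + 2 * Real.pi * Complex.I := by
  refine congrFun (eq_of_exp_eq (F := fun z ↦ L (z + 2 * Real.pi * Complex.I))
    (G := fun z ↦ L z + 2 * Real.pi * Complex.I) (by fun_prop) (by fun_prop) (fun z ↦ ?_) M ?_) z
  · rw [Complex.exp_add, hLk, hLk, Complex.exp_add, Complex.exp_two_pi_mul_I, mul_one, mul_one]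
  · rw [hLM M (Complex.ofReal_re M).ge]
    exact hLM _ (by simp)

lemma abs_im_log_lift_lt_pi (hLk : ∀ z, Complex.exp (L z) = k (Complex.exp z))
    (hLM : ∀ z, M ≤ z.re → L z = z) (hk : ∀ t : ℝ, 0 < t → k t ∈ Complex.slitPlane) (x : ℝ) :
    |(L x).im| < Real.pi := by
  have hslit (x : ℝ) : k (Complex.exp x) ∈ Complex.slitPlane := by
    rw [← Complex.ofReal_exp]
    exact hk _ (Real.exp_pos x)
  have hlog : L x = Complex.log (k (Complex.exp x)) := by
    refine congrFun (eq_of_exp_eq (F := fun x : ℝ ↦ L x)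
      (G := fun x : ℝ ↦ Complex.log (k (Complex.exp x))) (by fun_prop)
      (Continuous.clog (by fun_prop) hslit)
      (fun x ↦ ?_) M ?_) x
    · rw [hLk, Complex.exp_log (Complex.slitPlane_ne_zero (hslit x))]
    · have hM := hLM M (Complex.ofReal_re M).ge
      rw [← hLk, hM, ← Complex.ofReal_exp, ← Complex.ofReal_log (Real.exp_pos M).le, Real.log_exp]
  rw [hlog, Complex.log_im, abs_lt]
  exact ⟨Complex.neg_pi_lt_arg _,
    (Complex.arg_le_pi _).lt_of_ne (Complex.mem_slitPlane_iff_arg.1 (hslit x)).1⟩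

lemma log_lift_eq_self_of_re_le (hLk : ∀ z, Complex.exp (L z) = k (Complex.exp z))
    (him : ∀ x : ℝ, |(L x).im| < Real.pi) {m : ℝ} (hkm : ∀ z, ‖z‖ ≤ Real.exp m → k z = z) :
    ∀ z, z.re ≤ m → L z = z := by
  have hfix (z : ℂ) (hz : z.re ≤ m) : k (Complex.exp z) = Complex.exp z :=
    hkm _ (by rw [Complex.norm_exp]; exact Real.exp_le_exp.2 hz)
  have hm : L m = m := by
    obtain ⟨h1, h2⟩ := abs_lt.1 (him m)
    rw [← Complex.log_exp h1 h2.le, hLk, hfix m (Complex.ofReal_re m).le,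
      Complex.log_exp (by simp [Real.pi_pos]) (by simp [Real.pi_pos.le])]
  exact eqOn_of_exp_eqOn (convex_halfSpace_re_le m).isPreconnected
    L.continuous.continuousOn continuousOn_id (fun z hz ↦ (hLk z).trans (hfix z hz))
    (Complex.ofReal_re m).le hm

lemma exists_norm_sub_le_of_periodic {f : ℂ → ℂ} (hf : Continuous f)
    (hper : ∀ z, f (z + 2 * Real.pi * Complex.I) = f z + 2 * Real.pi * Complex.I)
    (hM : ∀ z, M ≤ |z.re| → f z = z) : ∃ C, ∀ z, ‖f z - z‖ ≤ C := by
  obtain ⟨C, hC⟩ := (isCompact_Icc.reProdIm isCompact_Icc).exists_bound_of_continuousOn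
    (s := Icc (-M) M ×ℂ Icc 0 (2 * Real.pi)) (f := fun z ↦ f z - z) (by fun_prop)
  have hdisp : Function.Periodic (fun z ↦ f z - z) (2 * Real.pi * Complex.I) := fun z ↦ by
    beta_reduce
    rw [hper]
    ring
  refine ⟨max C 0, fun z ↦ ?_⟩
  by_cases hz : M ≤ |z.re|
  · simp [hM z hz]
  set n : ℤ := ⌊z.im / (2 * Real.pi)⌋
  have hn : (z - n * (2 * Real.pi * Complex.I)).im = z.im - n * (2 * Real.pi) := by simp
  have hle : n * (2 * Real.pi) ≤ z.im := (le_div_iff₀ Real.two_pi_pos).1 (Int.floor_le _)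
  have hlt : z.im < (n + 1) * (2 * Real.pi) :=
    (div_lt_iff₀ Real.two_pi_pos).1 (Int.lt_floor_add_one _)
  rw [← hdisp.sub_int_mul_eq n]
  refine (hC _ ⟨?_, ?_⟩).trans (le_max_left C 0)
  · simpa using abs_le.1 (not_le.1 hz).le
  · rw [mem_preimage, hn]
    exact ⟨by linarith, by linarith⟩

end LogLift

section SlitPlane

lemma exists_eq_neg_of_notMem_slitPlane {z : ℂ} (hz : z ∉ Complex.slitPlane) :
    ∃ t : ℝ, 0 ≤ t ∧ z = (-t : ℝ) := by
  rw [Complex.mem_slitPlane_iff, not_or, not_lt, not_not] at hz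
  exact ⟨-z.re, neg_nonneg.2 hz.1, Complex.ext (by simp) (by simp [hz.2])⟩

lemma mem_annularIsotopyGroup_of_eq_self_near_ray {f : ℂ ≃ₜ ℂ} {R : ℝ}
    (hray : ∀ t : ℝ, 0 ≤ t → ∀ᶠ z in 𝓝 (t : ℂ), f z = z) (hR : ∀ z, R ≤ ‖z‖ → f z = z) :
    f ∈ annularIsotopyGroup := by
  have hbdd : Bornology.IsBounded {z | f z ≠ z} := isBounded_iff_forall_norm_le.2
    ⟨R, fun z hz ↦ (not_le.1 fun h ↦ hz (hR z h)).le⟩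
  refine mem_annularIsotopyGroup_of_starConvex (S := -Complex.slitPlane)
    Complex.starConvex_one_slitPlane.neg (by simp [Complex.slitPlane]) hbdd.isCompact_closure
    (fun z hz ↦ ?_) fun z hz ↦ by_contra fun h ↦ hz (subset_closure h)
  by_contra h
  obtain ⟨t, ht, hzt⟩ := exists_eq_neg_of_notMem_slitPlane h
  rw [Complex.ofReal_neg, neg_inj] at hzt
  obtain ⟨w, hw, hwt⟩ :=
    ((mem_closure_iff_frequently.1 hz).and_eventually (hzt ▸ hray t ht)).exists
  exact hw hwt

variable {k : ℂ ≃ₜ ℂ}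

lemma exists_mem_annularIsotopyGroup_eq_near_ray {m M : ℝ} (hkm : ∀ z, ‖z‖ ≤ Real.exp m → k z = z)
    (hkM : ∀ z, Real.exp M ≤ ‖z‖ → k z = z)
    (hk : ∀ t : ℝ, 0 < t → k t ∈ Complex.slitPlane) :
    ∃ f ∈ annularIsotopyGroup, (∀ᶠ z in 𝓝 0, f z = z) ∧
      ∀ t : ℝ, 0 < t → ∀ᶠ z in 𝓝 (t : ℂ), f z = k z := by
  obtain ⟨L, hLk, hLM⟩ := exists_homeomorph_log_lift
    (hkm 0 (by rw [norm_zero]; exact (Real.exp_pos m).le)) hkM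
  have him := abs_im_log_lift_lt_pi hLk hLM hk
  have hLm := log_lift_eq_self_of_re_le hLk him hkm
  have hLre (z : ℂ) (hz : max (-m) M ≤ |z.re|) : L z = z := by
    rcases le_abs'.1 hz with h | h
    · exact hLm z (by linarith [le_max_left (-m) M])
    · exact hLM z ((le_max_right _ _).trans h)
  obtain ⟨C, hC⟩ := exists_norm_sub_le_of_periodic L.continuous
    (log_lift_add_two_pi_mul_I hLk hLM) hLre
  obtain ⟨T, K, hK, hKπ, hTK, hTL⟩ := exists_strip_homeomorph_eq_near_real hC hLre him
  have hKe : K ⊆ Complex.expOpenPartialHomeomorph.source := fun z hz ↦ abs_lt.1 (hKπ z hz)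
  obtain ⟨f, hf⟩ := exists_homeomorph_eq_transport hK hKe hTK
  have himage : IsCompact (Complex.expOpenPartialHomeomorph '' K) :=
    hK.image_of_continuousOn (Complex.expOpenPartialHomeomorph.continuousOn.mono hKe)
  have hslit : Complex.expOpenPartialHomeomorph '' K ⊆ Complex.slitPlane := by
    rintro _ ⟨z, hz, rfl⟩
    exact Complex.expOpenPartialHomeomorph.map_source (hKe hz)
  have hfix (z : ℂ) (hz : z ∉ Complex.expOpenPartialHomeomorph '' K) : f z = z :=
    (hf z).trans (transport_of_notMem hTK hz)
  refine ⟨f, mem_annularIsotopyGroup_of_starConvex Complex.starConvex_one_slitPlane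
    Complex.zero_notMem_slitPlane himage hslit hfix, ?_, fun t ht ↦ ?_⟩
  · filter_upwards [himage.isClosed.isOpen_compl.mem_nhds
      fun h ↦ Complex.zero_notMem_slitPlane (hslit h)] using hfix
  · rw [← Real.exp_log ht, Complex.ofReal_exp]
    have hexp : ∀ᶠ z in 𝓝 (Real.log t : ℂ), f (Complex.exp z) = k (Complex.exp z) := by
      have hsource := Complex.expOpenPartialHomeomorph.open_source.mem_nhds
        (x := (Real.log t : ℂ)) ⟨by simp [Real.pi_pos], by simp [Real.pi_pos]⟩
      filter_upwards [hTL (Real.log t), hsource] with z hz hzs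
      rw [← hLk, ← hz, hf]
      exact transport_apply hzs
    exact Complex.isOpenMap_exp.nhds_le _ hexp

lemma mem_annularIsotopyGroup_of_mem_slitPlane (h0 : ∀ᶠ z in 𝓝 0, k z = z) {R : ℝ}
    (hR : ∀ z, R ≤ ‖z‖ → k z = z) (hk : ∀ t : ℝ, 0 < t → k t ∈ Complex.slitPlane) :
    k ∈ annularIsotopyGroup := by
  obtain ⟨r, hr, hkr⟩ := nhds_basis_closedBall.mem_iff.1 h0
  obtain ⟨f, hf, hf0, hfk⟩ := exists_mem_annularIsotopyGroup_eq_near_ray (k := k)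
    (m := Real.log r) (M := R)
    (fun z hz ↦ hkr (mem_closedBall_zero_iff.2 (by rwa [Real.exp_log hr] at hz)))
    (fun z hz ↦ hR z (by linarith [Real.add_one_le_exp R])) hk
  obtain ⟨R', hR'⟩ := exists_eq_self_of_mem_annularIsotopyGroup hf
  have hinv {z : ℂ} (hz : f z = k z) : (f⁻¹ * k) z = z := by
    rw [Homeomorph.mul_apply, ← hz, Homeomorph.inv_apply, Homeomorph.symm_apply_apply]
  suffices f⁻¹ * k ∈ annularIsotopyGroup from (Subgroup.mul_mem_cancel_left _ (inv_mem hf)).1 this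
  refine mem_annularIsotopyGroup_of_eq_self_near_ray (R := max R R') (fun t ht ↦ ?_) fun z hz ↦ ?_
  · rcases ht.eq_or_lt with rfl | ht
    · filter_upwards [hf0, h0] with z hfz hkz using hinv (hfz.trans hkz.symm)
    · filter_upwards [hfk t ht] with z hz using hinv hz
  · exact hinv ((hR' z ((le_max_right _ _).trans hz)).trans
      (hR z ((le_max_left _ _).trans hz)).symm)

lemma circle_exp_mul_mem_slitPlane {θ t : ℝ} (hθ : |θ| < Real.pi) (ht : 0 < t) :
    (Circle.exp θ * t : ℂ) ∈ Complex.slitPlane := by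
  obtain ⟨h1, h2⟩ := abs_lt.1 hθ
  rw [Complex.mem_slitPlane_iff_arg, mul_comm, Complex.arg_real_mul _ ht,
    Circle.arg_exp h1 h2.le]
  exact ⟨h2.ne, mul_ne_zero (Complex.ofReal_ne_zero.2 ht.ne') (Circle.coe_ne_zero _)⟩

lemma twist_zero_mem_annularIsotopyGroup {ρ : ℝ} (hρ : 0 < ρ) (θ : ℝ) :
    twist 0 ρ θ ∈ annularIsotopyGroup := by
  simpa only [HolePush, recenter_zero, one_mul, inv_one, mul_one] using holePush_twist 0 hρ θ

lemma circle_mul_twist_neg_arg (c : Circle) (ρ : ℝ) (z : ℂ) :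
    c * twist 0 ρ (-(c : ℂ).arg) z = Circle.exp ((c : ℂ).arg * (1 - plateau 0 ρ z)) * z := by
  have hc : Circle.exp ((c : ℂ).arg * (1 - plateau 0 ρ z)) =
      c * Circle.exp (-(c : ℂ).arg * plateau 0 ρ z) := by
    nth_rw 2 [← Circle.exp_arg c]
    rw [← Circle.exp_add]
    ring_nf
  rw [twist_apply, zero_add, sub_zero, ← mul_assoc, hc, Circle.coe_mul]

lemma norm_twist_zero (ρ θ : ℝ) (z : ℂ) : ‖twist 0 ρ θ z‖ = ‖z‖ := by
  simpa only [sub_zero] using norm_twist_sub 0 ρ θ z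

lemma abs_mul_one_sub_plateau_le (θ ρ : ℝ) (z : ℂ) : |θ * (1 - plateau 0 ρ z)| ≤ |θ| := by
  rw [abs_mul]
  exact mul_le_of_le_one_right (abs_nonneg _)
    (abs_le.2 ⟨by linarith [plateau_le_one 0 ρ z], by linarith [plateau_nonneg 0 ρ z]⟩)

lemma mem_annularIsotopyGroup_of_rotation_of_mem_slitPlane {c : Circle}
    (h0 : ∀ᶠ z in 𝓝 0, k z = c * z) {R : ℝ} (hR : ∀ z, R ≤ ‖z‖ → k z = z)
    (hk : ∀ t : ℝ, 0 < t → k t ∈ Complex.slitPlane) : k ∈ annularIsotopyGroup := by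
  obtain ⟨r, hr, hkr⟩ := nhds_basis_closedBall.mem_iff.1 h0
  replace hkr (z : ℂ) (hz : ‖z‖ ≤ r) : k z = c * z := hkr (mem_closedBall_zero_iff.2 hz)
  have hargc : |(c : ℂ).arg| < Real.pi := by
    have hc := hk r hr
    rw [hkr _ (by rw [Complex.norm_of_nonneg hr.le]), mul_comm, Complex.mem_slitPlane_iff_arg,
      Complex.arg_real_mul _ hr] at hc
    exact abs_lt.2 ⟨Complex.neg_pi_lt_arg _, (Complex.arg_le_pi _).lt_of_ne hc.1⟩
  set ρ := r / 3 with hρr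
  have hρ : 0 < ρ := by positivity
  set τ := twist 0 ρ (-(c : ℂ).arg) with hτdef
  have hτ : τ ∈ annularIsotopyGroup := twist_zero_mem_annularIsotopyGroup hρ _
  have hkτ (z : ℂ) (hz : ‖z‖ ≤ r) :
      k (τ z) = Circle.exp ((c : ℂ).arg * (1 - plateau 0 ρ z)) * z := by
    rw [hkr _ ((norm_twist_zero _ _ _).trans_le hz), circle_mul_twist_neg_arg]
  suffices k * τ ∈ annularIsotopyGroup from (Subgroup.mul_mem_cancel_right _ hτ).1 this
  obtain ⟨R', hR'⟩ := exists_eq_self_of_mem_annularIsotopyGroup hτ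
  refine mem_annularIsotopyGroup_of_mem_slitPlane (R := max R R') ?_ (fun z hz ↦ ?_) fun t ht ↦ ?_
  · filter_upwards [closedBall_mem_nhds 0 hρ] with z hz
    rw [mem_closedBall_zero_iff] at hz
    rw [Homeomorph.mul_apply, hkτ z (by linarith), plateau_eq_one hρ (by rwa [sub_zero]), sub_self,
      mul_zero, Circle.exp_zero, Circle.coe_one, one_mul]
  · rw [Homeomorph.mul_apply, hR' z ((le_max_right _ _).trans hz),
      hR z ((le_max_left _ _).trans hz)]
  · rw [Homeomorph.mul_apply]
    have hnorm : ‖(t : ℂ)‖ = t := Complex.norm_of_nonneg ht.le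
    rcases le_total t r with htr | htr
    · rw [hkτ t (hnorm.trans_le htr)]
      exact circle_exp_mul_mem_slitPlane ((abs_mul_one_sub_plateau_le _ _ _).trans_lt hargc) ht
    · rw [hτdef, twist_of_le_norm hρ _ (by rw [sub_zero, hnorm]; linarith)]
      exact hk t ht

theorem mem_annularIsotopyGroup {g : ℂ ≃ₜ ℂ} (h0 : ∀ᶠ z in 𝓝 0, g z = z) {R : ℝ}
    (hR : ∀ z, R ≤ ‖z‖ → g z = z) : g ∈ annularIsotopyGroup := by
  obtain ⟨u, hu, hug⟩ := exists_mem_annularIsotopyGroup_apply_ne h0 hR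
  obtain ⟨c, hc⟩ := exists_rotation_of_mem_annularIsotopyGroup (inv_mem hu)
  obtain ⟨R', hR'⟩ := exists_eq_self_of_mem_annularIsotopyGroup (inv_mem hu)
  suffices u⁻¹ * g ∈ annularIsotopyGroup from (Subgroup.mul_mem_cancel_left _ (inv_mem hu)).1 this
  refine mem_annularIsotopyGroup_of_rotation_of_mem_slitPlane (c := c) (R := max R R') ?_
    (fun z hz ↦ ?_) fun t ht ↦ ?_
  · filter_upwards [h0, hc] with z hgz hcz
    rw [Homeomorph.mul_apply, hgz, hcz]
  · rw [Homeomorph.mul_apply, hR z ((le_max_left _ _).trans hz),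
      hR' z ((le_max_right _ _).trans hz)]
  · by_contra h
    obtain ⟨s, hs, hst⟩ := exists_eq_neg_of_notMem_slitPlane h
    rw [Homeomorph.mul_apply, Homeomorph.inv_apply, Homeomorph.symm_apply_eq] at hst
    rcases hs.eq_or_lt with rfl | hs
    · have hu0 : (0 : ℂ) = u 0 := by
        simpa only [mul_zero, Homeomorph.inv_apply, Homeomorph.symm_apply_eq] using hc.self_of_nhds
      rw [neg_zero, Complex.ofReal_zero, ← hu0, ← h0.self_of_nhds] at hst
      exact ht.ne' (Complex.ofReal_eq_zero.1 (g.injective hst))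
    · exact hug s t hs ht hst.symm

end SlitPlane

section Winding

lemma exists_lift_of_homotopy {E B X : Type*} [TopologicalSpace E] [TopologicalSpace B]
    [TopologicalSpace X] {p : E → B} (hp : IsCoveringMap p) {N : I × X → B} (hN : Continuous N)
    {g : X → E} (hg : Continuous g) (hgN : ∀ x, p (g x) = N (1, x)) :
    ∃ f : X → E, Continuous f ∧ ∀ x, p (f x) = N (0, x) := by
  let N' : C(I × X, B) := ⟨fun q ↦ N (unitInterval.symm q.1, q.2), by fun_prop⟩
  have hN0 (x : X) : N' (0, x) = p (g x) := by
    rw [hgN]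
    exact congrArg (fun t ↦ N (t, x)) unitInterval.symm_zero
  refine ⟨fun x ↦ hp.liftHomotopy N' ⟨g, hg⟩ hN0 (1, x), by fun_prop, fun x ↦ ?_⟩
  exact (congrFun (hp.liftHomotopy_lifts N' ⟨g, hg⟩ hN0) (1, x)).trans
    (congrArg (fun t ↦ N (t, x)) unitInterval.symm_one)

lemma not_continuous_log_circle {L : AddCircle (1 : ℝ) → ℂ} (hL : Continuous L) {ρ : ℂ}
    (hLρ : ∀ x, Complex.exp (L x) = ρ * x.toCircle) : False := by
  have hexp (x : ℝ) : Complex.exp (L x - L 0) = Complex.exp (2 * Real.pi * x * Complex.I) := by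
    rw [Complex.exp_sub, hLρ, hLρ, AddCircle.toCircle_zero, AddCircle.toCircle_apply_mk,
      Circle.coe_one, mul_one, mul_div_cancel_left₀, Circle.coe_exp]
    · push_cast
      rw [div_one]
    · intro h
      have := hLρ 0
      rw [h, zero_mul] at this
      exact Complex.exp_ne_zero _ this
  have hline := eq_of_exp_eq (F := fun x : ℝ ↦ L x - L 0)
    (G := fun x : ℝ ↦ 2 * Real.pi * x * Complex.I)
    ((hL.comp (AddCircle.continuous_mk' 1)).sub continuous_const) (by fun_prop) hexp 0 (by simp)
  have h1 := congrFun hline 1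
  rw [AddCircle.coe_period, sub_self] at h1
  simp [Real.pi_ne_zero] at h1

lemma not_homotopic_circle_of_slitPlane {N : I × AddCircle (1 : ℝ) → ℂ} (hN : Continuous N)
    (hN0 : ∀ q, N q ≠ 0) {ρ c : ℂ} (hρ : ∀ x, N (0, x) = ρ * x.toCircle) (hc : c ≠ 0)
    (hslit : ∀ x, N (1, x) / c ∈ Complex.slitPlane) : False := by
  have hexp (x : AddCircle (1 : ℝ)) :
      Complex.exp (Complex.log (N (1, x) / c) + Complex.log c) = N (1, x) := by
    rw [Complex.exp_add, Complex.exp_log (Complex.slitPlane_ne_zero (hslit x)),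
      Complex.exp_log hc, div_mul_cancel₀ _ hc]
  obtain ⟨L, hL, hLN⟩ := exists_lift_of_homotopy Complex.isCoveringMap_exp
    (N := fun q ↦ ⟨N q, hN0 q⟩) (by fun_prop)
    (g := fun x ↦ Complex.log (N (1, x) / c) + Complex.log c)
    ((Continuous.clog (by fun_prop) hslit).add continuous_const) fun x ↦ Subtype.ext (hexp x)
  exact not_continuous_log_circle hL fun x ↦ (congrArg Subtype.val (hLN x)).trans (hρ x)

-- Sliding a small circle around `φ x₀` off `x₀` would make it contractible in the complement of
-- `φ x₀`.
lemma range_notMem_nhds_of_slide {X : Type*} [TopologicalSpace X] {φ : X → ℂ}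
    (hφ : IsEmbedding φ) {x₀ : X} {s : I × X → X} (hs : Continuous s) (hs0 : ∀ x, s (0, x) = x)
    (hs1 : s (1, x₀) ≠ x₀) (hsx : ∀ t x, s (t, x) = x₀ → x = x₀) : range φ ∉ 𝓝 (φ x₀) := by
  intro hrange
  set c := φ (s (1, x₀)) - φ x₀ with hc
  have hc0 : c ≠ 0 := sub_ne_zero.2 (hφ.injective.ne hs1)
  have hcont : Continuous fun x ↦ (φ (s (1, x)) - φ x₀) / c := by
    have := hφ.continuous
    fun_prop
  have hslit : ∀ᶠ x in 𝓝 x₀, (φ (s (1, x)) - φ x₀) / c ∈ Complex.slitPlane :=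
    hcont.continuousAt.eventually_mem (Complex.isOpen_slitPlane.mem_nhds (by
      rw [← hc, div_self hc0]
      exact Complex.one_mem_slitPlane))
  rw [hφ.isInducing.nhds_eq_comap, eventually_comap] at hslit
  obtain ⟨ρ, hρ, hball⟩ := nhds_basis_closedBall.mem_iff.1 (inter_mem hrange hslit)
  have hcircle (x : AddCircle (1 : ℝ)) : φ x₀ + ρ * x.toCircle ∈ closedBall (φ x₀) ρ := by
    rw [mem_closedBall, dist_self_add_left, norm_mul, Circle.norm_coe, mul_one,
      Complex.norm_of_nonneg hρ.le]
  choose γ hγ using fun x ↦ (hball (hcircle x)).1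
  have hγcont : Continuous γ := hφ.continuous_iff.2 <| by
    have : Continuous fun x : AddCircle (1 : ℝ) ↦ φ x₀ + ρ * (x.toCircle : ℂ) := by fun_prop
    exact this.congr fun x ↦ (hγ x).symm
  have hγne (x : AddCircle (1 : ℝ)) : γ x ≠ x₀ := fun h ↦ by
    have := hγ x
    rw [h, left_eq_add, mul_eq_zero, Complex.ofReal_eq_zero] at this
    exact this.elim hρ.ne' (Circle.coe_ne_zero _)
  refine not_homotopic_circle_of_slitPlane (N := fun q ↦ φ (s (q.1, γ q.2)) - φ x₀) ?_
    (fun q h ↦ hγne q.2 (hsx q.1 _ (hφ.injective (sub_eq_zero.1 h)))) (ρ := ρ) (fun x ↦ ?_) hc0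
    fun x ↦ (hball (hcircle x)).2 _ (hγ x)
  · have := hφ.continuous
    fun_prop
  · simp only [hs0, hγ, add_sub_cancel_left]

end Winding

section CircleInterpolation

variable {δ : AddCircle (1 : ℝ) → ℝ}

lemma strictMono_add_displacement (hδ : Continuous δ)
    (hinj : Function.Injective fun x ↦ x + (δ x : AddCircle (1 : ℝ))) :
    StrictMono fun x : ℝ ↦ x + δ x := by
  have hcont : Continuous fun x : ℝ ↦ x + δ x :=
    continuous_id.add (hδ.comp (AddCircle.continuous_mk' 1))
  have hinj' : Function.Injective fun x : ℝ ↦ x + δ x := fun x y hxy ↦ by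
    have hcoe : (x : AddCircle (1 : ℝ)) = y := hinj <| by
      simpa only [AddCircle.coe_add] using congrArg ((↑) : ℝ → AddCircle (1 : ℝ)) hxy
    simpa only [hcoe, add_left_inj] using hxy
  refine (hcont.strictMono_of_inj hinj').resolve_right fun hanti ↦ ?_
  have := hanti zero_lt_one
  simp only [AddCircle.coe_period, AddCircle.coe_zero] at this
  linarith

lemma bijective_add_smul_displacement (hδ : Continuous δ)
    (hinj : Function.Injective fun x ↦ x + (δ x : AddCircle (1 : ℝ))) {s : ℝ} (hs : s ∈ Icc 0 1) :
    Function.Bijective fun x ↦ x + ((s * δ x : ℝ) : AddCircle (1 : ℝ)) := by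
  have hcont : Continuous fun x : ℝ ↦ x + s * δ x :=
    continuous_id.add (continuous_const.mul (hδ.comp (AddCircle.continuous_mk' 1)))
  have hmono : StrictMono fun x : ℝ ↦ x + s * δ x := by
    intro x y hxy
    have hφ := strictMono_add_displacement hδ hinj hxy
    have hconv (x : ℝ) : x + s * δ x = (1 - s) * x + s * (x + δ x) := by ring
    beta_reduce at hφ ⊢
    rw [hconv, hconv]
    rcases hs.1.eq_or_lt with rfl | hs0
    · linarith
    · have := mul_le_mul_of_nonneg_left hxy.le (sub_nonneg.2 hs.2)
      have := mul_lt_mul_of_pos_left hφ hs0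
      linarith
  obtain ⟨C, hC⟩ := isCompact_univ.exists_bound_of_continuousOn (f := fun x ↦ s * δ x)
    (continuous_const.mul hδ).continuousOn
  have hsurj : Function.Surjective fun x : ℝ ↦ x + s * δ x :=
    hcont.surjective
      (tendsto_atTop_mono (fun x ↦ add_le_add_right (abs_le.1 (hC x (mem_univ _))).1 x)
        (tendsto_atTop_add_const_right atTop (-C) tendsto_id))
      (tendsto_atBot_mono (fun x ↦ add_le_add_right (abs_le.1 (hC x (mem_univ _))).2 x)
        (tendsto_atBot_add_const_right atBot C tendsto_id))
  refine ⟨fun x y hxy ↦ ?_, fun y ↦ ?_⟩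
  · induction x using QuotientAddGroup.induction_on with | H x => ?_
    induction y using QuotientAddGroup.induction_on with | H y => ?_
    obtain ⟨n, hn⟩ := (AddCircle.coe_eq_zero_iff 1).1 <|
      (AddCircle.coe_sub 1 (x + s * δ x) (y + s * δ y)).trans (sub_eq_zero.2 hxy)
    have hy : ((y + n • (1 : ℝ) : ℝ) : AddCircle (1 : ℝ)) = y := by
      rw [AddCircle.coe_add, (AddCircle.coe_eq_zero_iff 1).2 ⟨n, rfl⟩, add_zero]
    have hxy' : x = y + n • (1 : ℝ) := hmono.injective <| by
      rw [hy]
      linarith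
    exact (congrArg _ hxy').trans hy
  · induction y using QuotientAddGroup.induction_on with | H y => ?_
    obtain ⟨x, rfl⟩ := hsurj y
    exact ⟨x, (AddCircle.coe_add _ _ _).symm⟩

end CircleInterpolation

section Cylinder

/-- Polar coordinates with logarithmic radius, embedding the cylinder onto the punctured plane and
`(ℝ/ℤ) × [0,1]` onto the closed annulus `1 ≤ ‖w‖ ≤ e`. -/
noncomputable def polar (p : AddCircle (1 : ℝ) × ℝ) : ℂ := Real.exp p.2 * p.1.toCircle

lemma norm_polar (p : AddCircle (1 : ℝ) × ℝ) : ‖polar p‖ = Real.exp p.2 := by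
  rw [polar, norm_mul, Circle.norm_coe, mul_one, Complex.norm_of_nonneg (Real.exp_pos _).le]

lemma polar_coe (x y : ℝ) : polar (x, y) = Complex.exp ⟨y, 2 * Real.pi * x⟩ := by
  rw [polar, AddCircle.toCircle_apply_mk, div_one, Complex.exp_eq_exp_re_mul_sin_add_cos,
    Circle.coe_exp, Complex.ofReal_exp, Complex.exp_mul_I]

lemma isOpenEmbedding_polar : IsOpenEmbedding polar := by
  refine .of_continuous_injective_isOpenMap (by unfold polar; fun_prop) (fun p q hpq ↦ ?_) ?_
  · have hsnd : p.2 = q.2 := Real.exp_injective <| by rw [← norm_polar, hpq, norm_polar]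
    have hexp : (Real.exp q.2 : ℂ) ≠ 0 := Complex.ofReal_ne_zero.2 (Real.exp_pos _).ne'
    rw [polar, polar, hsnd, mul_right_inj' hexp] at hpq
    exact Prod.ext (AddCircle.injective_toCircle one_ne_zero (Circle.ext hpq)) hsnd
  · let lin : ℝ × ℝ ≃ₜ ℂ := ((Homeomorph.prodComm ℝ ℝ).trans ((Homeomorph.refl ℝ).prodCongr
      (Homeomorph.mulLeft₀ _ Real.two_pi_pos.ne'))).trans Complex.equivRealProdCLM.symm.toHomeomorph
    have hcomp : polar ∘ Prod.map ((↑) : ℝ → AddCircle (1 : ℝ)) id = Complex.exp ∘ lin :=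
      funext fun p ↦ polar_coe p.1 p.2
    exact .of_comp ((AddCircle.continuous_mk' 1).prodMap continuous_id)
      (QuotientAddGroup.mk_surjective.prodMap Function.surjective_id)
      (hcomp ▸ Complex.isOpenMap_exp.comp lin.isOpenMap)

lemma exists_polar_eq {w : ℂ} (hw : w ≠ 0) : ∃ p, polar p = w := by
  refine ⟨((w.arg / (2 * Real.pi) : ℝ), Real.log ‖w‖), ?_⟩
  rw [polar_coe, mul_div_cancel₀ _ Real.two_pi_pos.ne', ← Complex.log_re, ← Complex.log_im,
    Complex.eta, Complex.exp_log hw]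

lemma image_polar_Icc (a b : ℝ) :
    polar '' (univ ×ˢ Icc a b) = {w | ‖w‖ ∈ Icc (Real.exp a) (Real.exp b)} := by
  ext w
  refine ⟨?_, fun hw ↦ ?_⟩
  · rintro ⟨p, ⟨-, hp⟩, rfl⟩
    rwa [mem_ofPred_eq, norm_polar, mem_Icc, Real.exp_le_exp, Real.exp_le_exp]
  · have hw0 : w ≠ 0 := norm_pos_iff.1 ((Real.exp_pos a).trans_le hw.1)
    obtain ⟨p, rfl⟩ := exists_polar_eq hw0
    rw [mem_ofPred_eq, norm_polar, mem_Icc, Real.exp_le_exp, Real.exp_le_exp] at hw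
    exact ⟨p, ⟨mem_univ _, hw⟩, rfl⟩

end Cylinder

lemma isHomeomorph_of_compact_support {X : Type*} [TopologicalSpace X] [T2Space X]
    [WeaklyLocallyCompactSpace X] {f : X → X} (hf : Continuous f) (hbij : Function.Bijective f)
    {K : Set X} (hK : IsCompact K) (hfK : ∀ x ∉ K, f x = x) : IsHomeomorph f := by
  have hproper : IsProperMap f := by
    refine isProperMap_iff_isCompact_preimage.2 ⟨hf, fun Z hZ ↦ ?_⟩
    refine (hK.union hZ).of_isClosed_subset (hZ.isClosed.preimage hf) fun x hx ↦ ?_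
    exact or_iff_not_imp_left.2 fun hxK ↦ hfK x hxK ▸ hx
  exact isHomeomorph_iff_continuous_isClosedMap_bijective.2 ⟨hf, hproper.isClosedMap, hbij⟩

section CollarExtension

/-- The inclusion of the closed annulus into the cylinder. -/
def toCylinder (p : AddCircle (1 : ℝ) × I) : AddCircle (1 : ℝ) × ℝ := (p.1, p.2)

/-- The closed annulus stretched affinely onto the part of the cylinder at heights between `-m` and
`1 + m`. -/
def stretch (m : ℝ) (p : AddCircle (1 : ℝ) × I) : AddCircle (1 : ℝ) × ℝ :=
  (p.1, p.2 + m * (2 * p.2 - 1))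

lemma stretch_zero : stretch 0 = toCylinder := by
  unfold stretch toCylinder
  simp only [zero_mul, add_zero]

lemma continuous_stretch : Continuous fun q : ℝ × (AddCircle (1 : ℝ) × I) ↦ stretch q.1 q.2 := by
  unfold stretch
  fun_prop

lemma injective_stretch {m : ℝ} (hm : 0 ≤ m) : Function.Injective (stretch m) := fun p q hpq ↦ by
  obtain ⟨hfst, hsnd⟩ := Prod.mk.inj hpq
  have hscale : (1 + 2 * m) * p.2 = (1 + 2 * m) * q.2 := by linarith
  exact Prod.ext hfst (Subtype.ext (mul_left_cancel₀ (by positivity) hscale))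

lemma range_stretch {m : ℝ} (hm : 0 ≤ m) : range (stretch m) = univ ×ˢ Icc (-m) (1 + m) := by
  have hpos : 0 < 1 + 2 * m := by positivity
  ext p
  refine ⟨?_, fun ⟨_, hp⟩ ↦ ?_⟩
  · rintro ⟨q, rfl⟩
    exact ⟨mem_univ _, by simp only [stretch]; nlinarith [q.2.2.1],
      by simp only [stretch]; nlinarith [q.2.2.2]⟩
  · refine ⟨(p.1, ⟨(p.2 + m) / (1 + 2 * m), div_nonneg (by linarith [hp.1]) hpos.le,
      (div_le_one hpos).2 (by linarith [hp.2])⟩), Prod.ext rfl ?_⟩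
    simp only [stretch]
    field_simp
    ring

lemma isEmbedding_toCylinder : IsEmbedding toCylinder := by
  rw [← stretch_zero]
  exact ((continuous_stretch.comp (Continuous.prodMk_right 0)).isClosedEmbedding
    (injective_stretch le_rfl)).isEmbedding

lemma range_toCylinder : range toCylinder = univ ×ˢ Icc 0 1 := by
  rw [← stretch_zero, range_stretch le_rfl, neg_zero, add_zero]

lemma snd_apply_one {h : AddCircle (1 : ℝ) × I ≃ₜ AddCircle (1 : ℝ) × I}
    (h0 : ∀ p, (h p).2 = 0 ↔ p.2 = 0) (x : AddCircle (1 : ℝ)) : (h (x, 1)).2 = 1 := by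
  by_contra hne
  have hpos : (h (x, 1)).2 ≠ 0 := (h0 _).not.2 one_ne_zero
  have hφ : IsEmbedding fun p ↦ polar (toCylinder (h p)) :=
    isOpenEmbedding_polar.isEmbedding.comp (isEmbedding_toCylinder.comp h.isEmbedding)
  refine range_notMem_nhds_of_slide hφ (x₀ := (x, 1))
    (s := fun q ↦ (q.2.1, unitInterval.symm q.1 * q.2.2)) (by fun_prop) (fun p ↦ ?_) ?_ ?_ ?_
  · rw [unitInterval.symm_zero, one_mul]
  · rw [unitInterval.symm_one, zero_mul]
    exact fun hp ↦ zero_ne_one (Prod.mk.inj hp).2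
  · intro t p hp
    refine Prod.ext (Prod.mk.inj hp).1 (le_antisymm unitInterval.le_one' ?_)
    exact (Prod.mk.inj hp).2.ge.trans unitInterval.mul_le_right
  · have hrange : range (fun p ↦ polar (toCylinder (h p))) = polar '' (univ ×ˢ Icc 0 1) := by
      rw [← range_toCylinder, ← range_comp]
      exact h.surjective.range_comp (polar ∘ toCylinder)
    rw [hrange]
    exact isOpenEmbedding_polar.isOpenMap.image_mem_nhds (prod_mem_nhds univ_mem
      (Icc_mem_nhds (unitInterval.pos_iff_ne_zero.2 hpos) (unitInterval.lt_one_iff_ne_one.2 hne)))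

/-- Extends a self-map `h` of the closed annulus to the cylinder when `h` displaces the angle by
`δ` and preserves both boundary circles: on the collars of width one the angular displacement of
the nearest boundary point fades out, and beyond them the extension is the identity. -/
noncomputable def collarExtension (h : AddCircle (1 : ℝ) × I → AddCircle (1 : ℝ) × I)
    (δ : AddCircle (1 : ℝ) × I → ℝ) (p : AddCircle (1 : ℝ) × ℝ) : AddCircle (1 : ℝ) × ℝ :=
  let y := projIcc (0 : ℝ) 1 zero_le_one p.2
  (p.1 + (max 0 (1 - |p.2 - y|) * δ (p.1, y) : ℝ), (h (p.1, y)).2 + (p.2 - y))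

variable {h : AddCircle (1 : ℝ) × I ≃ₜ AddCircle (1 : ℝ) × I} {δ : AddCircle (1 : ℝ) × I → ℝ}

lemma continuous_collarExtension (hδ : Continuous δ) : Continuous (collarExtension h δ) := by
  unfold collarExtension
  have := h.continuous
  have := AddCircle.continuous_mk' (1 : ℝ)
  fun_prop

lemma collarExtension_toCylinder (hfst : ∀ p, (h p).1 = p.1 + δ p) (p : AddCircle (1 : ℝ) × I) :
    collarExtension h δ (toCylinder p) = toCylinder (h p) := by
  simp only [collarExtension, toCylinder, projIcc_val, sub_self, abs_zero, sub_zero, add_zero,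
    max_eq_right zero_le_one, one_mul, hfst]

lemma snd_apply_projIcc (h0 : ∀ x, (h (x, 0)).2 = 0) (h1 : ∀ x, (h (x, 1)).2 = 1) {y : ℝ}
    (hy : y ∉ Icc (0 : ℝ) 1) (x : AddCircle (1 : ℝ)) :
    (h (x, projIcc 0 1 zero_le_one y)).2 = projIcc 0 1 zero_le_one y := by
  rw [mem_Icc, not_and_or, not_le, not_le] at hy
  rcases hy with hy | hy
  · rw [projIcc_of_le_left _ hy.le]
    exact h0 x
  · rw [projIcc_of_right_le _ hy.le]
    exact h1 x

lemma snd_collarExtension (h0 : ∀ x, (h (x, 0)).2 = 0) (h1 : ∀ x, (h (x, 1)).2 = 1)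
    {p : AddCircle (1 : ℝ) × ℝ} (hp : p.2 ∉ Icc (0 : ℝ) 1) : (collarExtension h δ p).2 = p.2 := by
  simp only [collarExtension, snd_apply_projIcc h0 h1 hp, add_sub_cancel]

lemma collarExtension_eq_self (h0 : ∀ x, (h (x, 0)).2 = 0) (h1 : ∀ x, (h (x, 1)).2 = 1)
    {p : AddCircle (1 : ℝ) × ℝ} (hp : p.2 ∉ Icc (-1 : ℝ) 2) : collarExtension h δ p = p := by
  refine Prod.ext ?_ (snd_collarExtension h0 h1 fun hp' ↦
    hp (Icc_subset_Icc (by norm_num) (by norm_num) hp'))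
  have hle : 1 - |p.2 - projIcc (0 : ℝ) 1 zero_le_one p.2| ≤ 0 := by
    rw [mem_Icc, not_and_or, not_le, not_le] at hp
    rw [sub_nonpos, le_abs]
    rcases hp with hp | hp
    · right
      linarith [(projIcc (0 : ℝ) 1 zero_le_one p.2).2.1]
    · left
      linarith [(projIcc (0 : ℝ) 1 zero_le_one p.2).2.2]
  simp only [collarExtension, max_eq_left hle, zero_mul, AddCircle.coe_zero, add_zero]

lemma bijective_fst_collarExtension (hδ : Continuous δ) (hfst : ∀ p, (h p).1 = p.1 + δ p)
    (h0 : ∀ x, (h (x, 0)).2 = 0) (h1 : ∀ x, (h (x, 1)).2 = 1) {y : ℝ} (hy : y ∉ Icc (0 : ℝ) 1) :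
    Function.Bijective fun x ↦ (collarExtension h δ (x, y)).1 := by
  set b := projIcc (0 : ℝ) 1 zero_le_one y
  have hs : max 0 (1 - |y - b|) ∈ Icc (0 : ℝ) 1 :=
    ⟨le_max_left _ _, max_le zero_le_one (sub_le_self _ (abs_nonneg _))⟩
  refine bijective_add_smul_displacement (δ := fun x ↦ δ (x, b)) (by fun_prop) (fun x x' hx ↦ ?_) hs
  beta_reduce at hx
  rw [← hfst (x, b), ← hfst (x', b)] at hx
  exact congrArg Prod.fst (h.injective (Prod.ext hx
    ((snd_apply_projIcc h0 h1 hy x).trans (snd_apply_projIcc h0 h1 hy x').symm)))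

lemma bijective_collarExtension (hδ : Continuous δ) (hfst : ∀ p, (h p).1 = p.1 + δ p)
    (h0 : ∀ x, (h (x, 0)).2 = 0) (h1 : ∀ x, (h (x, 1)).2 = 1) :
    Function.Bijective (collarExtension h δ) := by
  have hannulus {p : AddCircle (1 : ℝ) × ℝ} (hp : p.2 ∈ Icc (0 : ℝ) 1) : ∃ q, toCylinder q = p :=
    ⟨(p.1, ⟨p.2, hp⟩), rfl⟩
  have hmem (p : AddCircle (1 : ℝ) × ℝ) :
      (collarExtension h δ p).2 ∈ Icc (0 : ℝ) 1 ↔ p.2 ∈ Icc (0 : ℝ) 1 := by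
    by_cases hp : p.2 ∈ Icc (0 : ℝ) 1
    · obtain ⟨q, rfl⟩ := hannulus hp
      rw [collarExtension_toCylinder hfst]
      exact iff_of_true (h q).2.2 hp
    · rw [snd_collarExtension h0 h1 hp]
  refine ⟨fun p q hpq ↦ ?_, fun q ↦ ?_⟩
  · have hpq' := (hmem p).symm.trans ((congrArg (·.2 ∈ Icc (0 : ℝ) 1) hpq).to_iff.trans (hmem q))
    by_cases hp : p.2 ∈ Icc (0 : ℝ) 1
    · obtain ⟨p, rfl⟩ := hannulus hp
      obtain ⟨q, rfl⟩ := hannulus (hpq'.1 hp)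
      rw [collarExtension_toCylinder hfst, collarExtension_toCylinder hfst] at hpq
      rw [h.injective (isEmbedding_toCylinder.injective hpq)]
    · have hsnd : p.2 = q.2 := by
        rw [← snd_collarExtension h0 h1 hp, hpq, snd_collarExtension h0 h1 (hpq'.not.1 hp)]
      refine Prod.ext ((bijective_fst_collarExtension hδ hfst h0 h1 hp).injective ?_) hsnd
      exact (congrArg Prod.fst hpq).trans (by rw [hsnd])
  · by_cases hq : q.2 ∈ Icc (0 : ℝ) 1
    · obtain ⟨q, rfl⟩ := hannulus hq
      exact ⟨toCylinder (h.symm q), by rw [collarExtension_toCylinder hfst, h.apply_symm_apply]⟩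
    · obtain ⟨x, hx⟩ := (bijective_fst_collarExtension hδ hfst h0 h1 hq).surjective q.1
      exact ⟨(x, q.2), Prod.ext hx (snd_collarExtension h0 h1 hq)⟩

end CollarExtension

section Extension

lemma exists_displacement {X : Type*} [TopologicalSpace X] {N : I × X → AddCircle (1 : ℝ)}
    (hN : Continuous N) : ∃ δ : X → ℝ, Continuous δ ∧ ∀ x, N (0, x) = N (1, x) + δ x := by
  obtain ⟨δ, hδ, hδN⟩ := exists_lift_of_homotopy (AddCircle.isCoveringMap_coe 1)
    (N := fun q ↦ N q - N (1, q.2)) (by fun_prop) (g := fun _ ↦ 0) continuous_const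
    fun x ↦ by rw [AddCircle.coe_zero, sub_self]
  exact ⟨δ, hδ, fun x ↦ by rw [hδN, add_sub_cancel]⟩

variable {h : AddCircle (1 : ℝ) × I ≃ₜ AddCircle (1 : ℝ) × I} {δ : AddCircle (1 : ℝ) × I → ℝ}

lemma exists_mem_annularIsotopyGroup_extending (hδ : Continuous δ)
    (hfst : ∀ p, (h p).1 = p.1 + δ p) (h0 : ∀ x, (h (x, 0)).2 = 0) (h1 : ∀ x, (h (x, 1)).2 = 1) :
    ∃ k ∈ annularIsotopyGroup, (∀ p, k (polar (toCylinder p)) = polar (toCylinder (h p))) ∧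
      ∀ p, p.2 ∉ Icc (0 : ℝ) 1 → ‖k (polar p)‖ = ‖polar p‖ := by
  have hK : IsCompact (univ ×ˢ Icc (-1) 2 : Set (AddCircle (1 : ℝ) × ℝ)) :=
    isCompact_univ.prod isCompact_Icc
  have hfix : ∀ p ∉ (univ ×ˢ Icc (-1) 2 : Set (AddCircle (1 : ℝ) × ℝ)),
      collarExtension h δ p = p := fun p hp ↦
    collarExtension_eq_self h0 h1 fun hp2 ↦ hp ⟨mem_univ _, hp2⟩
  obtain ⟨f, hf⟩ := isHomeomorph_iff_exists_homeomorph.1 (isHomeomorph_of_compact_support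
    (continuous_collarExtension (h := h) hδ) (bijective_collarExtension hδ hfst h0 h1) hK hfix)
  rw [← hf] at hfix
  let e := isOpenEmbedding_polar.toOpenPartialHomeomorph
  obtain ⟨k, hk⟩ := exists_homeomorph_eq_transport (e := e) hK (subset_univ _) hfix
  have hkpolar (p : AddCircle (1 : ℝ) × ℝ) : k (polar p) = polar (collarExtension h δ p) := by
    rw [hk, ← hf]
    exact transport_apply (e := e) (mem_univ p)
  have hkfix {w : ℂ} (hw : ‖w‖ ∉ Icc (Real.exp (-1)) (Real.exp 2)) : k w = w := by
    rw [hk]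
    exact transport_of_notMem hfix fun hmem ↦ hw ((image_polar_Icc (-1) 2).subset hmem)
  refine ⟨k, mem_annularIsotopyGroup ?_ (R := Real.exp 2 + 1) fun w hw ↦ ?_, fun p ↦ ?_,
    fun p hp ↦ ?_⟩
  · filter_upwards [ball_mem_nhds (0 : ℂ) (Real.exp_pos (-1))] with w hw
    exact hkfix fun hmem ↦ hmem.1.not_gt (mem_ball_zero_iff.1 hw)
  · exact hkfix fun hmem ↦ by linarith [hmem.2]
  · rw [hkpolar, collarExtension_toCylinder hfst]
  · rw [hkpolar, norm_polar, norm_polar, snd_collarExtension h0 h1 hp]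

end Extension

section Restriction

lemma exists_isotopy_of_conj {T X Y : Type*} [TopologicalSpace T] [CompactSpace T] [T2Space T]
    [TopologicalSpace X] [CompactSpace X] [T2Space X] [TopologicalSpace Y] [T2Space Y]
    {j : T × X → Y} (hj : Continuous j) (hinj : ∀ t, Function.Injective fun x ↦ j (t, x))
    {Φ : T × Y → Y} (hΦ : Continuous Φ) (hbij : ∀ t, Function.Bijective fun y ↦ Φ (t, y))
    (hrange : ∀ t y, Φ (t, y) ∈ range (fun x ↦ j (t, x)) ↔ y ∈ range fun x ↦ j (t, x)) :
    ∃ G : T × X → X, Continuous G ∧ (∀ t x, j (t, G (t, x)) = Φ (t, j (t, x))) ∧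
      ∀ t, IsHomeomorph fun x ↦ G (t, x) := by
  choose G hG using fun q : T × X ↦ (hrange q.1 _).2 ⟨q.2, rfl⟩
  have hJ : IsClosedEmbedding fun q : T × X ↦ (q.1, j q) := by
    refine (continuous_fst.prodMk hj).isClosedEmbedding ?_
    rintro ⟨t, x⟩ ⟨t', x'⟩ hq
    obtain ⟨rfl, hx⟩ := Prod.mk.inj hq
    rw [hinj t hx]
  have hcont : Continuous G := by
    have hpair : Continuous fun q : T × X ↦ (q.1, G q) := by
      refine hJ.isEmbedding.continuous_iff.2 ?_
      have : Continuous fun q : T × X ↦ (q.1, Φ (q.1, j q)) := by fun_prop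
      exact this.congr fun q ↦ Prod.ext rfl (hG q).symm
    exact continuous_snd.comp hpair
  refine ⟨G, hcont, fun t x ↦ hG (t, x), fun t ↦ isHomeomorph_iff_continuous_bijective.2
    ⟨by fun_prop, fun x x' hx ↦ ?_, fun x ↦ ?_⟩⟩
  · exact hinj t ((hbij t).injective ((hG (t, x)).symm.trans
      ((congrArg (fun x ↦ j (t, x)) hx).trans (hG (t, x')))))
  · obtain ⟨y, hy⟩ := (hbij t).surjective (j (t, x))
    obtain ⟨x', rfl⟩ := (hrange t y).1 ⟨x, hy.symm⟩
    exact ⟨x', hinj t ((hG (t, x')).trans hy)⟩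

lemma IsAnnularIsotopy.norm_apply_mem_iff {F : I × ℂ → ℂ} {r R : ℝ} (hF : IsAnnularIsotopy F r R)
    {S : Set ℝ} (hS : Ioo r R ⊆ S) (t : I) (z : ℂ) : ‖F (t, z)‖ ∈ S ↔ ‖z‖ ∈ S := by
  obtain ⟨c, hc⟩ := hF.rotates t
  have hdomain : ‖z‖ ∈ Ioo r R ∨ ‖F (t, z)‖ = ‖z‖ := by
    rw [mem_Ioo, or_iff_not_imp_left, not_and_or, not_lt, not_lt]
    rintro (hz | hz)
    · rw [hc z hz, norm_mul, Circle.norm_coe, one_mul]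
    · rw [hF.eq_self t z hz]
  have himage : ‖F (t, z)‖ ∈ Ioo r R ∨ ‖F (t, z)‖ = ‖z‖ := by
    rw [mem_Ioo, or_iff_not_imp_left, not_and_or, not_lt, not_lt]
    rintro (hz | hz)
    · have hnorm : ‖(c⁻¹ : Circle) * F (t, z)‖ = ‖F (t, z)‖ := by
        rw [norm_mul, Circle.norm_coe, one_mul]
      have hpre : F (t, (c⁻¹ : Circle) * F (t, z)) = F (t, z) := by
        rw [hc _ (hnorm.trans_le hz), ← mul_assoc, ← Circle.coe_mul, mul_inv_cancel,
          Circle.coe_one, one_mul]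
      rw [← hnorm, (hF.bijective t).injective hpre]
    · rw [(hF.bijective t).injective (hF.eq_self t _ hz)]
  by_cases heq : ‖F (t, z)‖ = ‖z‖
  · rw [heq]
  · exact iff_of_true (hS (himage.resolve_right heq)) (hS (hdomain.resolve_right heq))

lemma norm_apply_mem_Icc_iff {h : AddCircle (1 : ℝ) × I → AddCircle (1 : ℝ) × I} {k : ℂ ≃ₜ ℂ}
    (hk0 : k 0 = 0) (hkh : ∀ p, k (polar (toCylinder p)) = polar (toCylinder (h p)))
    (hnorm : ∀ p, p.2 ∉ Icc (0 : ℝ) 1 → ‖k (polar p)‖ = ‖polar p‖) {a b : ℝ} (ha : a ≤ 0)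
    (hb : 1 ≤ b) (w : ℂ) :
    ‖k w‖ ∈ Icc (Real.exp a) (Real.exp b) ↔ ‖w‖ ∈ Icc (Real.exp a) (Real.exp b) := by
  by_cases hw : w = 0
  · rw [hw, hk0]
  obtain ⟨p, rfl⟩ := exists_polar_eq hw
  by_cases hp : p.2 ∈ Icc (0 : ℝ) 1
  · have hmem (q : AddCircle (1 : ℝ) × I) :
        ‖polar (toCylinder q)‖ ∈ Icc (Real.exp a) (Real.exp b) := by
      rw [norm_polar]
      exact ⟨Real.exp_le_exp.2 (ha.trans q.2.2.1), Real.exp_le_exp.2 (q.2.2.2.trans hb)⟩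
    obtain ⟨q, rfl⟩ := range_toCylinder.ge ⟨mem_univ _, hp⟩
    rw [hkh]
    exact iff_of_true (hmem _) (hmem _)
  · rw [hnorm p hp]

lemma mem_range_polar_stretch {m : ℝ} (hm : 0 ≤ m) {w : ℂ} :
    w ∈ range (fun p ↦ polar (stretch m p)) ↔ ‖w‖ ∈ Icc (Real.exp (-m)) (Real.exp (1 + m)) := by
  have hrange := range_comp polar (stretch m)
  rw [range_stretch hm, image_polar_Icc] at hrange
  exact Set.ext_iff.1 hrange w

lemma exists_Ioo_subset_Icc_exp {r : ℝ} (hr : 0 < r) (R : ℝ) :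
    ∃ M, 0 ≤ M ∧ Ioo r R ⊆ Icc (Real.exp (-M)) (Real.exp (1 + M)) := by
  have hsmall := Real.tendsto_exp_neg_atTop_nhds_zero.eventually (eventually_le_nhds hr)
  have hlarge := (Real.tendsto_exp_atTop.comp
    (tendsto_atTop_add_const_left atTop 1 tendsto_id)).eventually_ge_atTop R
  obtain ⟨M, hM, hMr, hMR⟩ := ((eventually_ge_atTop 0).and (hsmall.and hlarge)).exists
  exact ⟨M, hM, fun x hx ↦ ⟨hMr.trans hx.1.le, hx.2.le.trans hMR⟩⟩

lemma exists_successive_clocks : ∃ u v : I → I, Continuous u ∧ Continuous v ∧ u 0 = 0 ∧ v 0 = 0 ∧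
    v 1 = 1 ∧ ∀ t, v t = 0 ∨ u t = 1 :=
  ⟨fun t ↦ projIcc 0 1 zero_le_one (2 * t), fun t ↦ projIcc 0 1 zero_le_one (2 * t - 1),
    by fun_prop, by fun_prop, projIcc_of_le_left _ (by norm_num),
    projIcc_of_le_left _ (by norm_num), projIcc_of_right_le _ (by norm_num), fun t ↦
      (le_total (2 * t : ℝ) 1).imp (fun ht ↦ projIcc_of_le_left _ (sub_nonpos.2 ht))
        fun ht ↦ projIcc_of_right_le _ ht⟩

lemma exists_isotopy_of_extension {h : AddCircle (1 : ℝ) × I → AddCircle (1 : ℝ) × I} {k : ℂ ≃ₜ ℂ}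
    (hk : k ∈ annularIsotopyGroup)
    (hkh : ∀ p, k (polar (toCylinder p)) = polar (toCylinder (h p)))
    (hnorm : ∀ p, p.2 ∉ Icc (0 : ℝ) 1 → ‖k (polar p)‖ = ‖polar p‖) :
    ∃ G : I × (AddCircle (1 : ℝ) × I) → AddCircle (1 : ℝ) × I, Continuous G ∧
      (∀ p, G (0, p) = h p) ∧ (∀ p, G (1, p) = p) ∧ ∀ t, IsHomeomorph fun p ↦ G (t, p) := by
  obtain ⟨F, r, R, hr, hF, hFk⟩ := hk
  obtain ⟨c, hc⟩ := hF.rotates 0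
  have hk0 : k 0 = 0 := by rw [← hFk, hc 0 (norm_zero.trans_le hr.le), mul_zero]
  obtain ⟨M, hM, hrR⟩ := exists_Ioo_subset_Icc_exp hr R
  -- An annulus containing all radii between `r` and `R` is invariant under the whole of `F`, so
  -- first widen the annulus while `k` acts on it, and only then run `F`.
  obtain ⟨u, v, hu, hv, hu0, hv0, hv1, huv⟩ := exists_successive_clocks
  have hm (t : I) : 0 ≤ u t * M := mul_nonneg (u t).2.1 hM
  let j (q : I × (AddCircle (1 : ℝ) × I)) : ℂ := polar (stretch (u q.1 * M) q.2)
  have hj : Continuous j := isOpenEmbedding_polar.continuous.comp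
    (continuous_stretch.comp (g := fun q ↦ stretch q.1 q.2)
      (f := fun q : I × (AddCircle (1 : ℝ) × I) ↦ (u q.1 * M, q.2)) (by fun_prop))
  have hinj (t : I) : Function.Injective fun p ↦ j (t, p) :=
    isOpenEmbedding_polar.injective.comp (injective_stretch (hm t))
  have hinvariant (t : I) (w : ℂ) :
      F (v t, w) ∈ range (fun p ↦ j (t, p)) ↔ w ∈ range fun p ↦ j (t, p) := by
    rw [mem_range_polar_stretch (hm t), mem_range_polar_stretch (hm t)]
    rcases huv t with hvt | hut
    · rw [hvt, hFk]
      exact norm_apply_mem_Icc_iff hk0 hkh hnorm (neg_nonpos.2 (hm t))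
        (le_add_of_nonneg_right (hm t)) w
    · rw [hut, Icc.coe_one, one_mul]
      exact hF.norm_apply_mem_iff hrR (v t) w
  obtain ⟨G, hG, hjG, hGhomeo⟩ := exists_isotopy_of_conj hj hinj
    (Φ := fun q ↦ F (v q.1, q.2)) (hF.continuous.comp (by fun_prop)) (fun t ↦ hF.bijective (v t))
    hinvariant
  have hj0 (p : AddCircle (1 : ℝ) × I) : j (0, p) = polar (toCylinder p) := by
    simp only [j, hu0, Icc.coe_zero, zero_mul, stretch_zero]
  refine ⟨G, hG, fun p ↦ hinj 0 ?_, fun p ↦ hinj 1 ?_, hGhomeo⟩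
  · beta_reduce
    rw [hjG, hv0, hFk, hj0, hj0, hkh]
  · beta_reduce
    rw [hjG, hv1, hF.one_apply]

end Restriction

end AnnulusIsotopy

/-- Every homeomorphism of the closed annulus `(ℝ/ℤ) × [0,1]` that is homotopic to
the identity and maps the boundary circle `(ℝ/ℤ) × {0}` onto itself is isotopic to
the identity. -/
theorem homeomorph_closed_annulus_homotopic_to_id_isotopic_to_id
    (h : Homeomorph (AddCircle (1 : ℝ) × I) (AddCircle (1 : ℝ) × I))
    (H : I × (AddCircle (1 : ℝ) × I) → AddCircle (1 : ℝ) × I)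
    (Hcont : Continuous H)
    (H0 : ∀ p, H (0, p) = h p)
    (H1 : ∀ p, H (1, p) = p)
    (hbd : (fun p => h p) '' {p : AddCircle (1 : ℝ) × I | (p.2 : ℝ) = 0}
      = {p : AddCircle (1 : ℝ) × I | (p.2 : ℝ) = 0}) :
    ∃ F : I × (AddCircle (1 : ℝ) × I) → AddCircle (1 : ℝ) × I, Continuous F ∧
      (∀ p, F (0, p) = h p) ∧
      (∀ p, F (1, p) = p) ∧
      (∀ t : I, IsHomeomorph fun p => F (t, p)) := by
  have hbottom (p : AddCircle (1 : ℝ) × I) : (h p).2 = 0 ↔ p.2 = 0 := by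
    have := h.injective.mem_set_image (s := {p | (p.2 : ℝ) = 0}) (a := p)
    rw [hbd] at this
    simpa only [Set.mem_ofPred_eq, Set.Icc.coe_eq_zero] using this
  obtain ⟨δ, hδ, hfst⟩ := AnnulusIsotopy.exists_displacement (N := fun q ↦ (H q).1) (by fun_prop)
  simp only [H0, H1] at hfst
  obtain ⟨k, hk, hkh, hnorm⟩ := AnnulusIsotopy.exists_mem_annularIsotopyGroup_extending hδ hfst
    (fun x ↦ (hbottom (x, 0)).2 rfl) (AnnulusIsotopy.snd_apply_one hbottom)
  exact AnnulusIsotopy.exists_isotopy_of_extension hk hkh hnorm
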